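/- Universality of the one-point function at the singular origin (Theorem 1.2(c), k = 1). Under the singular-origin setup with fixed real L ≥ 0, set δ := (n+L)/N. Then as N → ∞, (1/(Nδ))·R_{N,1}(z/√(Nδ)) converges to (conj(z) − z)·e^{−2|z|²}·κ_o(z, conj(z)), uniformly for z in compact subsets of ℂ, where κ_o(z, conj(z)) = 2(2|z|²)^{2L} ∫_0^1 s^{2L}( z e^{(1−s²)z²} − conj(z) e^{(1−s²)conj(z)²} )·E_{2,1+2L}((2s|z|²)²) ds. -/

import Mathlib

open MeasureTheory Filter Finset

noncomputable section

namespace SI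

/-- The weight `w(ζ) = |ζ|^{4L}(1+|ζ|²)^{-2(n+L+1)}`. -/
def wfun (n L : ℝ) (ζ : ℂ) : ℝ :=
  ‖ζ‖ ^ (4*L) * (1 + ‖ζ‖ ^ 2) ^ (-(2*(n+L+1)))

/-- The (unnormalised) joint eigenvalue density of the symplectic induced
spherical ensemble. -/
def jointDen (N : ℕ) (n L : ℝ) (ζs : Fin N → ℂ) : ℝ :=
  (∏ j : Fin N, ∏ k ∈ Finset.Ioi j,
     ‖ζs j - ζs k‖ ^ 2 * ‖ζs j - (starRingEnd ℂ) (ζs k)‖ ^ 2) *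
  ∏ j : Fin N, (‖ζs j - (starRingEnd ℂ) (ζs j)‖ ^ 2 * wfun n L (ζs j))

/-- The normalisation constant `Z_N` (the factor `π⁻ᴺ` accounts for `dA = d²ζ/π`). -/
def ZN (N : ℕ) (n L : ℝ) : ℝ :=
  (Real.pi)⁻¹ ^ N * ∫ ζs : Fin N → ℂ, jointDen N n L ζs

/-- The one-point correlation function `R_{N,1}`. -/
def R1 (N : ℕ) (n L : ℝ) (ζ : ℂ) : ℝ :=
  N * (ZN N n L)⁻¹ * (Real.pi)⁻¹ ^ (N-1) *
    ∫ ζs : Fin (N-1) → ℂ, jointDen (N-1+1) n L (Fin.cons ζ ζs)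

/-- The density value `δ = ((n+L)/N)(1+p²)⁻²`. -/
def dlt (N : ℕ) (n L p : ℝ) : ℝ := ((n+L)/N) * (1+p^2)^(-2 : ℝ)

/-- `√(Nδ)`. -/
def sc (N : ℕ) (n L p : ℝ) : ℝ := Real.sqrt (N * dlt N n L p)

/-- The admissible system sizes in the singular-origin regime:
positive `N` for which `n = (b+1)N` is an integer. -/
def Ssing (b : ℝ) : Set ℕ :=
  {N | 0 < N ∧ ∃ nm : ℕ, (nm : ℝ) = (b+1)*N}

/-- The real two-parametric Mittag-Leffler function `E_{2,1+2L}` (general real `L ≥ 0`). -/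
def MLER (L : ℝ) (x : ℝ) : ℝ := ∑' k : ℕ, x ^ k / Real.Gamma (2*k+1+2*L)

/-- The limiting kernel `κ_o(z, conj z)` at the singular origin for general real `L ≥ 0`. -/
def koConj (L : ℝ) (z : ℂ) : ℂ :=
  2 * (((2 * ‖z‖ ^ 2) ^ (2*L) : ℝ) : ℂ) *
    ∫ s in (0:ℝ)..1, ((s ^ (2*L) : ℝ) : ℂ) *
      (z * Complex.exp ((1-(s:ℂ)^2)*z^2)
        - (starRingEnd ℂ) z * Complex.exp ((1-(s:ℂ)^2)*((starRingEnd ℂ) z)^2)) *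
      ((MLER L ((2*s*‖z‖^2)^2) : ℝ) : ℂ)

/-- The block permutation attached to a permutation of blocks and flips inside blocks. -/
def wr {N : ℕ} (p : Equiv.Perm (Fin N) × (Fin N → Equiv.Perm (Fin 2))) :
    Equiv.Perm (Fin N × Fin 2) :=
  (Equiv.prodCongrRight p.2 : Equiv.Perm (Fin N × Fin 2)) *
    (Equiv.prodCongrLeft (fun _ : Fin 2 => p.1) : Equiv.Perm (Fin N × Fin 2))

lemma wr_apply {N : ℕ} (p : Equiv.Perm (Fin N) × (Fin N → Equiv.Perm (Fin 2))) (j : Fin N)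
    (e : Fin 2) : wr p (j, e) = (p.1 j, p.2 (p.1 j) e) := by
  simp [wr, Equiv.prodCongrRight, Equiv.prodCongrLeft]

lemma sign_wr {N : ℕ} (p : Equiv.Perm (Fin N) × (Fin N → Equiv.Perm (Fin 2))) :
    Equiv.Perm.sign (wr p) = ∏ k, Equiv.Perm.sign (p.2 k) := by
  rw [wr, Equiv.Perm.sign_mul, Equiv.Perm.sign_prodCongrRight, Equiv.Perm.sign_prodCongrLeft]
  simp

lemma wr_inj {N : ℕ} : Function.Injective (wr (N := N)) := by
  rintro ⟨t, e⟩ ⟨t', e'⟩ h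
  have h1 : ∀ j η, (t j, e (t j) η) = (t' j, e' (t' j) η) := by
    intro j η
    have := congrArg (fun s => s (j, η)) h
    simpa only [wr_apply] using this
  have ht : t = t' := by
    ext j
    have := h1 j 0
    simp only [Prod.mk.injEq] at this
    rw [this.1]
  subst ht
  have he : e = e' := by
    ext k η
    have := h1 (t.symm k) η
    simp only [Prod.mk.injEq, Equiv.apply_symm_apply] at this
    rw [this.2]
  rw [he]

lemma pigeon {N : ℕ} (σ : Equiv.Perm (Fin N × Fin 2)) (a b c : Fin N × Fin 2)
    (hab : a ≠ b) (hac : a ≠ c) (hbc : b ≠ c) (h1 : (σ a).1 = (σ b).1) (h2 : (σ a).1 = (σ c).1) :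
    False := by
  have k1 : (σ a).2 ≠ (σ b).2 := fun h => hab (σ.injective (Prod.ext h1 h))
  have k2 : (σ a).2 ≠ (σ c).2 := fun h => hac (σ.injective (Prod.ext h2 h))
  have k3 : (σ b).2 ≠ (σ c).2 := fun h => hbc (σ.injective (Prod.ext (h1.symm.trans h2) h))
  omega

lemma mem_range_wr {M : ℕ} (σ : Equiv.Perm (Fin (M+1) × Fin 2))
    (h : ∀ j : Fin M, (σ (j.succ, 0)).1 = (σ (j.succ, 1)).1) : ∃ p, wr p = σ := by
  have key : ∀ (j : Fin M) (j' : Fin (M+1)) (e : Fin 2), j.succ ≠ j' →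
      (σ (j', e)).1 = (σ (j.succ, 0)).1 → False := by
    intro j j' e hne heq
    exact pigeon σ (j.succ, 0) (j.succ, 1) (j', e) (by simp) (by simp [hne]) (by simp [hne])
      (h j) heq.symm
  have hinj : Function.Injective (fun j : Fin (M+1) => (σ (j, 0)).1) := by
    intro j j' hjj
    simp only at hjj
    by_contra hne
    rcases Fin.eq_zero_or_eq_succ j with h0 | ⟨i, hi⟩
    · rcases Fin.eq_zero_or_eq_succ j' with h0' | ⟨i', hi'⟩
      · exact hne (h0.trans h0'.symm)
      · subst hi'
        exact key i' j 0 (fun h => hne h.symm) hjj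
    · subst hi
      exact key i j' 0 hne hjj.symm
  have hbij : Function.Bijective (fun j : Fin (M+1) => (σ (j, 0)).1) :=
    Finite.injective_iff_bijective.mp hinj
  have h0 : ∀ j : Fin (M+1), (σ (j, 0)).1 = (σ (j, 1)).1 := by
    intro j
    rcases Fin.eq_zero_or_eq_succ j with h0 | ⟨i, hi⟩
    · subst h0
      obtain ⟨j', hj'⟩ := hbij.2 (σ (0, 1)).1
      simp only at hj'
      rcases Fin.eq_zero_or_eq_succ j' with h0' | ⟨i', hi'⟩
      · rw [← hj', h0']
      · subst hi'
        exact (key i' 0 1 (Fin.succ_ne_zero _) hj'.symm).elim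
    · subst hi
      exact h i
  have h0' : ∀ (j : Fin (M+1)) (e : Fin 2), (σ (j, e)).1 = (σ (j, 0)).1 := by
    intro j e
    fin_cases e
    · rfl
    · exact (h0 j).symm
  let t : Equiv.Perm (Fin (M+1)) := Equiv.ofBijective _ hbij
  have hε : ∀ k, Function.Bijective (fun e : Fin 2 => (σ (t.symm k, e)).2) := by
    intro k
    apply Finite.injective_iff_bijective.mp
    intro e e' hee
    have : σ (t.symm k, e) = σ (t.symm k, e') := Prod.ext (by rw [h0', h0' _ e']) hee
    have := σ.injective this
    simpa using this
  refine ⟨(t, fun k => Equiv.ofBijective _ (hε k)), ?_⟩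
  ext1 ⟨j, e⟩
  rw [wr_apply]
  simp only [Equiv.ofBijective_apply, Equiv.symm_apply_apply]
  exact Prod.ext (h0' j e).symm rfl

lemma sum_flip {M : ℕ} (k : Fin (M+1)) (g : Equiv.Perm (Fin 2) → ℂ) :
    ∑ ε : Fin (M+1) → Equiv.Perm (Fin 2), g (ε k) = 2 ^ M * ∑ e, g e := by
  have h := Finset.prod_univ_sum (R := ℂ) (fun _ : Fin (M+1) => (univ : Finset (Equiv.Perm (Fin 2))))
    (fun i e => if i = k then g e else 1)
  have h2 : ∀ ε : Fin (M+1) → Equiv.Perm (Fin 2),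
      (∏ i, if i = k then g (ε i) else 1) = g (ε k) := by
    intro ε
    rw [Finset.prod_ite_eq' univ k (fun i => g (ε i))]
    simp
  simp only [Fintype.piFinset_univ, h2] at h
  rw [← h, ← Finset.mul_prod_erase univ _ (mem_univ k), mul_comm]
  simp only [if_true]
  congr 1
  rw [Finset.prod_congr rfl (g := fun _ => (2:ℂ))]
  · simp
  · intro i hi
    rw [Finset.mem_erase] at hi
    simp [hi.1, Fintype.card_perm]

lemma sum_perm_zero {M : ℕ} (g : Fin (M+1) → ℂ) :
    ∑ t : Equiv.Perm (Fin (M+1)), g (t 0) = (M.factorial : ℂ) * ∑ k, g k := by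
  rw [← Equiv.sum_comp Equiv.Perm.decomposeFin.symm, Fintype.sum_prod_type]
  simp [Fintype.card_perm, Finset.mul_sum]

lemma comb (M : ℕ) (r : Fin (M+1) → ℂ) (hr : ∀ k, r k ≠ 0)
    (B : (Fin (M+1) × Fin 2) → (Fin (M+1) × Fin 2) → ℂ)
    (hB0 : ∀ p q, p.1 ≠ q.1 → B p q = 0)
    (hB1 : ∀ k (e : Equiv.Perm (Fin 2)), B (k, e 0) (k, e 1) = ((Equiv.Perm.sign e : ℤ) : ℂ) * r k)
    (F : (Fin (M+1) × Fin 2) → (Fin (M+1) × Fin 2) → ℂ) :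
    ∑ σ : Equiv.Perm (Fin (M+1) × Fin 2), ((Equiv.Perm.sign σ : ℤ) : ℂ) *
      (F (σ (0,0)) (σ (0,1)) * ∏ j : Fin M, B (σ (j.succ, 0)) (σ (j.succ, 1)))
    = (M.factorial : ℂ) * 2 ^ M * (∏ k, r k) *
        ∑ k, (F (k,0) (k,1) - F (k,1) (k,0)) / r k := by
  have hsq : ∀ e : Equiv.Perm (Fin 2), ((Equiv.Perm.sign e : ℤ) : ℂ) * ((Equiv.Perm.sign e : ℤ) : ℂ) = 1 := by
    intro e
    rcases Int.units_eq_one_or (Equiv.Perm.sign e) with h | h <;> simp [h]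
  calc _ = ∑ p, ((Equiv.Perm.sign (wr p) : ℤ) : ℂ) *
      (F (wr p (0,0)) (wr p (0,1)) * ∏ j : Fin M, B (wr p (j.succ, 0)) (wr p (j.succ, 1))) := by
        symm
        rw [← Finset.sum_image (s := univ) (g := wr) (f := fun σ => ((Equiv.Perm.sign σ : ℤ) : ℂ) *
      (F (σ (0,0)) (σ (0,1)) * ∏ j : Fin M, B (σ (j.succ, 0)) (σ (j.succ, 1)))) wr_inj.injOn]
        apply Finset.sum_subset (subset_univ _)
        intro σ _ hσ
        by_contra hne
        apply hσ
        have : ∀ j : Fin M, (σ (j.succ, 0)).1 = (σ (j.succ, 1)).1 := by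
          intro j
          by_contra hj
          apply hne
          rw [Finset.prod_eq_zero (mem_univ j) (hB0 _ _ hj)]
          simp
        obtain ⟨p, hp⟩ := mem_range_wr σ this
        exact Finset.mem_image.mpr ⟨p, mem_univ _, hp⟩
    _ = ∑ p : Equiv.Perm (Fin (M+1)) × (Fin (M+1) → Equiv.Perm (Fin 2)),
        (((Equiv.Perm.sign (p.2 (p.1 0)) : ℤ) : ℂ) *
          F (p.1 0, p.2 (p.1 0) 0) (p.1 0, p.2 (p.1 0) 1)) * ((∏ k, r k) / r (p.1 0)) := by
        refine Finset.sum_congr rfl fun p _ => ?_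
        rw [sign_wr]
        simp only [wr_apply, hB1]
        rw [Finset.prod_mul_distrib]
        have h1 : (((∏ k, Equiv.Perm.sign (p.2 k) : ℤˣ) : ℤ) : ℂ)
            = ((Equiv.Perm.sign (p.2 (p.1 0)) : ℤ) : ℂ) *
              ∏ j : Fin M, ((Equiv.Perm.sign (p.2 (p.1 j.succ)) : ℤ) : ℂ) := by
          rw [← Fin.prod_univ_succ (fun j => ((Equiv.Perm.sign (p.2 (p.1 j)) : ℤ) : ℂ)),
            Equiv.prod_comp p.1 (fun j => ((Equiv.Perm.sign (p.2 j) : ℤ) : ℂ))]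
          push_cast
          rfl
        have h2 : (∏ k, r k) / r (p.1 0) = ∏ j : Fin M, r (p.1 j.succ) := by
          rw [← Equiv.prod_comp p.1 r, Fin.prod_univ_succ, mul_div_cancel_left₀ _ (hr _)]
        have h3 : (∏ j : Fin M, ((Equiv.Perm.sign (p.2 (p.1 j.succ)) : ℤ) : ℂ)) *
            (∏ j : Fin M, ((Equiv.Perm.sign (p.2 (p.1 j.succ)) : ℤ) : ℂ)) = 1 := by
          rw [← Finset.prod_mul_distrib]
          exact Finset.prod_eq_one fun j _ => hsq _
        rw [h1, h2]
        linear_combination (((Equiv.Perm.sign (p.2 (p.1 0)) : ℤ) : ℂ) *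
          F (p.1 0, p.2 (p.1 0) 0) (p.1 0, p.2 (p.1 0) 1)) * (∏ j : Fin M, r (p.1 j.succ)) * h3
    _ = _ := by
        rw [Fintype.sum_prod_type]
        simp only [← Finset.sum_mul]
        rw [show (∑ t : Equiv.Perm (Fin (M+1)), (∑ ε : Fin (M+1) → Equiv.Perm (Fin 2),
          (((Equiv.Perm.sign (ε (t 0)) : ℤ) : ℂ) * F (t 0, ε (t 0) 0) (t 0, ε (t 0) 1))) *
            ((∏ k, r k) / r (t 0))) = ∑ t : Equiv.Perm (Fin (M+1)),
            (fun k => (2 ^ M * (F (k,0) (k,1) - F (k,1) (k,0))) * ((∏ k, r k) / r k)) (t 0) from ?_]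
        · rw [sum_perm_zero (fun k => (2 ^ M * (F (k,0) (k,1) - F (k,1) (k,0))) * ((∏ k, r k) / r k)), Finset.mul_sum, Finset.mul_sum]
          refine Finset.sum_congr rfl fun k _ => ?_
          ring
        · refine Finset.sum_congr rfl fun t _ => ?_
          simp only
          congr 1
          rw [sum_flip (t 0) (fun e => ((Equiv.Perm.sign e : ℤ) : ℂ) * F (t 0, e 0) (t 0, e 1))]
          congr 1
          have : (univ : Finset (Equiv.Perm (Fin 2))) = {1, Equiv.swap 0 1} := by decide
          rw [this, Finset.sum_pair (by decide), Equiv.Perm.sign_swap (by decide)]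
          simp [sub_eq_add_neg]

/-- The vector `(ζ₀, conj ζ₀, ζ₁, conj ζ₁, …)`. -/
def vv : (N : ℕ) → (Fin N → ℂ) → Fin (N*2) → ℂ
  | 0, _ => fun _ => 0
  | N+1, ζ => fun i => (Fin.cons (ζ 0) (Fin.cons ((starRingEnd ℂ) (ζ 0)) (vv N (fun j => ζ j.succ))) :
      Fin (N*2+1+1) → ℂ) (Fin.cast (by ring) i)

/-- Paired coordinates. -/
def pr {N : ℕ} (ζ : Fin N → ℂ) (p : Fin N × Fin 2) : ℂ :=
  if p.2 = 0 then ζ p.1 else (starRingEnd ℂ) (ζ p.1)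

lemma vv_eq (N : ℕ) (ζ : Fin N → ℂ) (p : Fin N × Fin 2) : vv N ζ (finProdFinEquiv p) = pr ζ p := by
  induction N with
  | zero => exact p.1.elim0
  | succ N ih =>
    obtain ⟨j, e⟩ := p
    simp only [vv, pr]
    rcases Fin.eq_zero_or_eq_succ j with h | ⟨i, hi⟩
    · subst h
      fin_cases e
      · rw [show Fin.cast _ (finProdFinEquiv ((0 : Fin (N+1)), (⟨0, by norm_num⟩ : Fin 2))) = (0 : Fin (N*2+1+1)) from
          Fin.ext (by simp [finProdFinEquiv])]
        simp
      · rw [show Fin.cast _ (finProdFinEquiv ((0 : Fin (N+1)), (⟨1, by norm_num⟩ : Fin 2))) = (Fin.succ 0 : Fin (N*2+1+1)) from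
          Fin.ext (by simp [finProdFinEquiv])]
        rw [Fin.cons_succ, Fin.cons_zero]
        simp
    · subst hi
      rw [show Fin.cast _ (finProdFinEquiv (i.succ, e)) = (Fin.succ (Fin.succ (finProdFinEquiv (i, e))) : Fin (N*2+1+1)) from
          Fin.ext (by simp [finProdFinEquiv]; ring)]
      rw [Fin.cons_succ, Fin.cons_succ, ih]
      simp [pr]

/-- Vandermonde product. -/
def vp {m : ℕ} (v : Fin m → ℂ) : ℂ := ∏ i : Fin m, ∏ j ∈ Finset.Ioi i, (v j - v i)

lemma vp_cons {m : ℕ} (a : ℂ) (v : Fin m → ℂ) :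
    vp (Fin.cons a v : Fin (m+1) → ℂ) = (∏ j, (v j - a)) * vp v := by
  simp only [vp, Fin.prod_univ_succ, Fin.prod_Ioi_zero, Fin.prod_Ioi_succ, Fin.cons_zero, Fin.cons_succ]

lemma prod_vv (N : ℕ) (ζ : Fin N → ℂ) (f : ℂ → ℂ) :
    ∏ i, f (vv N ζ i) = ∏ j, (f (ζ j) * f ((starRingEnd ℂ) (ζ j))) := by
  rw [← Equiv.prod_comp finProdFinEquiv, Fintype.prod_prod_type]
  refine Finset.prod_congr rfl fun j _ => ?_
  rw [Fin.prod_univ_two, vv_eq, vv_eq]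
  simp [pr]

lemma vp_vv (N : ℕ) (ζ : Fin N → ℂ) :
    vp (vv N ζ) = (∏ j : Fin N, ∏ k ∈ Finset.Ioi j,
     ((‖ζ j - ζ k‖ ^ 2 * ‖ζ j - (starRingEnd ℂ) (ζ k)‖ ^ 2 : ℝ) : ℂ)) *
      ∏ j : Fin N, ((starRingEnd ℂ) (ζ j) - ζ j) := by
  induction N with
  | zero => simp [vp]
  | succ N ih =>
    have hc : vp (vv (N+1) ζ) = vp (Fin.cons (ζ 0) (Fin.cons ((starRingEnd ℂ) (ζ 0)) (vv N (fun j => ζ j.succ))) :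
      Fin (N*2+1+1) → ℂ) := by
      have : ∀ (m m' : ℕ) (h : m' = m) (v : Fin m → ℂ), vp (fun i : Fin m' => v (Fin.cast h i)) = vp v := by
        intro m m' h v
        subst h
        rfl
      exact this _ _ (by ring) (Fin.cons (ζ 0) (Fin.cons ((starRingEnd ℂ) (ζ 0)) (vv N (fun j => ζ j.succ))) :
      Fin (N*2+1+1) → ℂ)
    rw [hc, vp_cons, vp_cons, ih, Fin.prod_univ_succ]
    simp only [Fin.cons_zero, Fin.cons_succ]
    rw [prod_vv N _ (fun z => z - ζ 0), prod_vv N _ (fun z => z - (starRingEnd ℂ) (ζ 0))]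
    rw [Fin.prod_univ_succ (fun j => ∏ k ∈ Finset.Ioi j, _), Fin.prod_univ_succ (fun j => ((starRingEnd ℂ) (ζ j) - ζ j))]
    simp only [Fin.prod_Ioi_zero, Fin.prod_Ioi_succ]
    have : (∏ k : Fin N, ((‖ζ 0 - ζ k.succ‖ ^ 2 * ‖ζ 0 - (starRingEnd ℂ) (ζ k.succ)‖ ^ 2 : ℝ) : ℂ))
      = (∏ j : Fin N, ((ζ j.succ - ζ 0) * ((starRingEnd ℂ) (ζ j.succ) - ζ 0))) *
        (∏ j : Fin N, ((ζ j.succ - (starRingEnd ℂ) (ζ 0)) * ((starRingEnd ℂ) (ζ j.succ) - (starRingEnd ℂ) (ζ 0)))) := by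
      rw [← Finset.prod_mul_distrib]
      refine Finset.prod_congr rfl fun j _ => ?_
      push_cast
      rw [← Complex.mul_conj', ← Complex.mul_conj']
      simp only [map_sub, Complex.conj_conj]
      ring
    rw [this]
    ring

lemma jointDen_eq (N : ℕ) (n L : ℝ) (P : ℕ → Polynomial ℂ) (hdeg : ∀ i, (P i).natDegree = i)
    (hmon : ∀ i, (P i).Monic) (ζ : Fin N → ℂ) :
    ((jointDen N n L ζ : ℝ) : ℂ) = ∑ σ : Equiv.Perm (Fin N × Fin 2), ((Equiv.Perm.sign σ : ℤ) : ℂ) *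
      ∏ j : Fin N, ((P (2 * (σ (j,0)).1 + (σ (j,0)).2)).eval (ζ j) *
        (P (2 * (σ (j,1)).1 + (σ (j,1)).2)).eval ((starRingEnd ℂ) (ζ j)) *
        ((ζ j - (starRingEnd ℂ) (ζ j)) * (wfun n L (ζ j) : ℂ))) := by
  have h1 : vp (vv N ζ) = ∑ σ : Equiv.Perm (Fin N × Fin 2), ((Equiv.Perm.sign σ : ℤ) : ℂ) *
      ∏ j : Fin N, ((P (2 * (σ (j,0)).1 + (σ (j,0)).2)).eval (ζ j) *
        (P (2 * (σ (j,1)).1 + (σ (j,1)).2)).eval ((starRingEnd ℂ) (ζ j))) := by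
    have e1 : vp (vv N ζ) = (Matrix.vandermonde (vv N ζ)).det := by
      rw [Matrix.det_vandermonde]; rfl
    rw [e1, Matrix.det_eval_matrixOfPolynomials_eq_det_vandermonde (vv N ζ) (fun i => P i) (fun i => hdeg i)
      (fun i => hmon i), ← Matrix.det_transpose,
      ← Matrix.det_submatrix_equiv_self finProdFinEquiv, Matrix.det_apply']
    refine Finset.sum_congr rfl fun σ _ => ?_
    congr 1
    rw [Fintype.prod_prod_type]
    refine Finset.prod_congr rfl fun j _ => ?_
    rw [Fin.prod_univ_two]
    simp only [Matrix.submatrix_apply, Matrix.transpose_apply, Matrix.of_apply, vv_eq]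
    simp [pr, finProdFinEquiv, add_comm]
  have h2 : ((jointDen N n L ζ : ℝ) : ℂ) = vp (vv N ζ) *
      ∏ j, ((ζ j - (starRingEnd ℂ) (ζ j)) * (wfun n L (ζ j) : ℂ)) := by
    rw [vp_vv, mul_assoc, ← Finset.prod_mul_distrib]
    have h3 : ∀ j, ((starRingEnd ℂ) (ζ j) - ζ j) * ((ζ j - (starRingEnd ℂ) (ζ j)) * (wfun n L (ζ j) : ℂ))
        = ((‖ζ j - (starRingEnd ℂ) (ζ j)‖ ^ 2 * wfun n L (ζ j) : ℝ) : ℂ) := by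
      intro j
      push_cast
      rw [← Complex.mul_conj']
      simp only [map_sub, Complex.conj_conj]
      ring
    rw [Finset.prod_congr rfl (fun j _ => h3 j), jointDen]
    push_cast
    rfl
  rw [h2, h1, Finset.sum_mul]
  refine Finset.sum_congr rfl fun σ _ => ?_
  rw [mul_assoc, ← Finset.prod_mul_distrib]

lemma beta_real (α β : ℝ) (hα : 0 < α) (hβ : 0 < β) :
    ∫ x in Set.Ioo (0:ℝ) 1, x ^ (α-1) * (1-x) ^ (β-1) = ProbabilityTheory.beta α β := by
  rw [ProbabilityTheory.beta_eq_betaIntegralReal α β hα hβ, Complex.betaIntegral,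
    intervalIntegral.integral_of_le (by norm_num), ← integral_Ioc_eq_integral_Ioo]
  rw [← RCLike.re_to_complex, ← integral_re]
  · refine setIntegral_congr_fun measurableSet_Ioc fun x hx => ?_
    have : (((x ^ (α-1) * (1-x) ^ (β-1) : ℝ) : ℂ)) = (x:ℂ) ^ ((α:ℂ)-1) * (1 - (x:ℂ)) ^ ((β:ℂ)-1) := by
      push_cast
      rw [Complex.ofReal_cpow hx.1.le, Complex.ofReal_cpow (by linarith [hx.2])]
      push_cast
      rfl
    change _ = RCLike.re ((x:ℂ) ^ ((α:ℂ)-1) * (1 - (x:ℂ)) ^ ((β:ℂ)-1))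
    rw [← this]
    simp
  · have := Complex.betaIntegral_convergent (u := α) (v := β) (by simpa) (by simpa)
    rw [intervalIntegrable_iff_integrableOn_Ioc_of_le (by norm_num)] at this
    exact this

lemma beta_Ioi (α β : ℝ) (hα : 0 < α) (hβ : 0 < β) :
    ∫ t in Set.Ioi (0:ℝ), t ^ (α-1) * (1+t) ^ (-(α+β)) = ProbabilityTheory.beta α β := by
  rw [← beta_real α β hα hβ]
  have himg : (fun t : ℝ => t / (1+t)) '' Set.Ioi 0 = Set.Ioo 0 1 := by
    ext u
    simp only [Set.mem_image, Set.mem_Ioi, Set.mem_Ioo]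
    constructor
    · rintro ⟨t, ht, rfl⟩
      refine ⟨by positivity, ?_⟩
      rw [div_lt_one (by positivity)]; linarith
    · rintro ⟨h0, h1⟩
      refine ⟨u / (1-u), div_pos h0 (by linarith), ?_⟩
      have : 1 - u ≠ 0 := by linarith
      field_simp
      ring
  rw [← himg, integral_image_eq_integral_abs_deriv_smul (f' := fun t => 1 / (1+t)^2) measurableSet_Ioi]
  · refine setIntegral_congr_fun measurableSet_Ioi fun t ht => ?_
    have ht' : (0:ℝ) < t := ht
    have h1 : (0:ℝ) < 1 + t := by linarith
    have h2 : 1 - t / (1+t) = (1+t)⁻¹ := by field_simp; ring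
    simp only [smul_eq_mul]
    rw [h2, Real.div_rpow ht'.le h1.le, abs_of_pos (by positivity), Real.inv_rpow h1.le,
      show -(α+β) = -((α-1) + (β-1) + (2:ℕ)) by push_cast; ring, Real.rpow_neg h1.le,
      Real.rpow_add h1, Real.rpow_add h1, Real.rpow_natCast]
    have := Real.rpow_pos_of_pos h1 (α-1)
    have := Real.rpow_pos_of_pos h1 (β-1)
    field_simp
  · intro t ht
    have h1 : (1 + t) ≠ 0 := by have : (0:ℝ) < t := ht; linarith
    have := ((hasDerivAt_id t).div ((hasDerivAt_id t).const_add 1) h1).hasDerivWithinAt (s := Set.Ioi 0)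
    have e : (1 * (1 + id t) - id t * 1) / (1 + id t) ^ 2 = 1 / (1 + t) ^ 2 := by
      simp only [id]
      congr 1
      ring
    rw [e] at this
    exact this
  · intro t ht t' ht' h
    have h1 : (1 + t) ≠ 0 := by have : (0:ℝ) < t := ht; linarith
    have h2 : (1 + t') ≠ 0 := by have : (0:ℝ) < t' := ht'; linarith
    simp only at h
    rw [div_eq_div_iff h1 h2] at h
    linarith

lemma rad (n L : ℝ) (hL : 0 ≤ L) (p : ℕ) (hp : (p:ℝ) < 4*n+2) :
    ∫ ζ : ℂ, ‖ζ‖ ^ p * wfun n L ζ =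
      Real.pi * ProbabilityTheory.beta ((p:ℝ)/2+2*L+1) (2*n+1-(p:ℝ)/2) := by
  rw [show (fun ζ : ℂ => ‖ζ‖ ^ p * wfun n L ζ) = fun ζ : ℂ => (fun y : ℝ => y ^ p *
    (y ^ (4*L) * (1 + y ^ 2) ^ (-(2*(n+L+1))))) ‖ζ‖ from rfl,
    integral_fun_norm_addHaar volume (fun y : ℝ => y ^ p *
    (y ^ (4*L) * (1 + y ^ 2) ^ (-(2*(n+L+1))))), Complex.finrank_real_complex]
  rw [← beta_Ioi _ _ (by positivity) (by linarith), 
    ← integral_comp_rpow_Ioi (fun t : ℝ => t ^ ((p:ℝ)/2+2*L+1-1) *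
      (1+t) ^ (-((p:ℝ)/2+2*L+1 + (2*n+1-(p:ℝ)/2)))) (two_ne_zero)]
  have hb : volume.real (Metric.ball (0:ℂ) 1) = Real.pi := by
    simp [Measure.real, Complex.volume_ball]
  rw [hb, smul_eq_mul, nsmul_eq_mul, mul_left_comm, ← integral_const_mul]
  congr 1
  refine setIntegral_congr_fun measurableSet_Ioi fun y hy => ?_
  have hy' : (0:ℝ) < y := hy
  simp only [smul_eq_mul]
  rw [← Real.rpow_mul hy'.le, show (2:ℝ) * ((p:ℝ)/2+2*L+1-1) = (p:ℝ) + 4*L by ring, Real.rpow_add hy',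
    Real.rpow_natCast, Real.rpow_two, show -((p:ℝ)/2+2*L+1 + (2*n+1-(p:ℝ)/2)) = -(2*(n+L+1)) by ring,
    show (2:ℝ)-1 = 1 by norm_num, Real.rpow_one]
  simp
  ring

lemma wfun_nonneg (n L : ℝ) (ζ : ℂ) : 0 ≤ wfun n L ζ := by
  unfold wfun; positivity

lemma wfun_meas (n L : ℝ) : Measurable (wfun n L) := by
  unfold wfun; fun_prop

lemma rad_int (n L : ℝ) (hL : 0 ≤ L) (p : ℕ) (hp : (p:ℝ) < 4*n+2) :
    Integrable (fun ζ : ℂ => ‖ζ‖ ^ p * wfun n L ζ) := by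
  apply Integrable.of_integral_ne_zero
  rw [rad n L hL p hp]
  exact (mul_pos Real.pi_pos (ProbabilityTheory.beta_pos (by positivity) (by linarith))).ne'

lemma mono_int (n L : ℝ) (hL : 0 ≤ L) (a b : ℕ) (hp : ((a+b : ℕ):ℝ) < 4*n+2) :
    Integrable (fun ζ : ℂ => ζ ^ a * (starRingEnd ℂ) ζ ^ b * (wfun n L ζ : ℂ)) := by
  refine (rad_int n L hL (a+b) hp).mono' ?_ ?_
  · have := wfun_meas n L
    exact (by fun_prop : Measurable _).aestronglyMeasurable
  · refine Eventually.of_forall fun ζ => le_of_eq ?_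
    simp [pow_add, abs_of_nonneg (wfun_nonneg n L ζ)]

/-- The radial moments. -/
def hh (n L : ℝ) (k : ℕ) : ℝ := ProbabilityTheory.beta ((k:ℝ)+2*L+1) (2*n+1-k)

lemma mono_diag (n L : ℝ) (hL : 0 ≤ L) (a : ℕ) (hp : (a:ℝ) < 2*n+1) :
    ∫ ζ : ℂ, ζ ^ a * (starRingEnd ℂ) ζ ^ a * (wfun n L ζ : ℂ) = Real.pi * hh n L a := by
  have := rad n L hL (2*a) (by push_cast; linarith)
  rw [show ((2*a : ℕ) : ℝ)/2 = a by push_cast; ring] at this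
  rw [hh, ← Complex.ofReal_mul, ← this, ← integral_complex_ofReal]
  congr 1
  ext ζ
  rw [← mul_pow, Complex.mul_conj']
  push_cast
  ring

lemma mono_off (n L : ℝ) (a b : ℕ) (hab : a ≠ b) :
    ∫ ζ : ℂ, ζ ^ a * (starRingEnd ℂ) ζ ^ b * (wfun n L ζ : ℂ) = 0 := by
  set f : ℂ → ℂ := fun ζ => ζ ^ a * (starRingEnd ℂ) ζ ^ b * (wfun n L ζ : ℂ) with hf
  set c : Circle := Circle.exp (Real.pi / ((a:ℝ) - b)) with hc
  have hmp := (rotation c).measurePreserving.integral_comp' (f := (rotation c).toHomeomorph.toMeasurableEquiv) f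
  have hne : (a:ℝ) - b ≠ 0 := by
    rw [sub_ne_zero]; exact_mod_cast hab
  have hcc : (c:ℂ) ^ a * (starRingEnd ℂ) (c:ℂ) ^ b = -1 := by
    rw [hc, Circle.coe_exp, ← Complex.exp_conj, ← Complex.exp_nat_mul, ← Complex.exp_nat_mul, ← Complex.exp_add]
    rw [← Complex.exp_pi_mul_I]
    congr 1
    have hne' : (a:ℂ) - b ≠ 0 := by exact_mod_cast hne
    simp
    field_simp
    ring
  have h1 : ∀ ζ, f ((rotation c).toHomeomorph.toMeasurableEquiv ζ) = - f ζ := by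
    intro ζ
    have : (rotation c).toHomeomorph.toMeasurableEquiv ζ = (c:ℂ) * ζ := rfl
    rw [this, hf]
    simp only [map_mul, mul_pow]
    have hw : wfun n L ((c:ℂ) * ζ) = wfun n L ζ := by unfold wfun; rw [norm_mul, Circle.norm_coe, one_mul]
    rw [hw]
    linear_combination (ζ ^ a * (starRingEnd ℂ) ζ ^ b * (wfun n L ζ : ℂ)) * hcc
  simp only [h1] at hmp
  rw [integral_neg] at hmp
  have h2 : (2:ℂ) * ∫ ζ, f ζ = 0 := by linear_combination -hmp
  simpa using h2

/-- The integrand of the skew product. -/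
def ski (n L : ℝ) (p q : Polynomial ℂ) (ζ : ℂ) : ℂ :=
  p.eval ζ * q.eval ((starRingEnd ℂ) ζ) * ((ζ - (starRingEnd ℂ) ζ) * (wfun n L ζ : ℂ))

/-- The skew product. -/
def sk (n L : ℝ) (p q : Polynomial ℂ) : ℂ := ∫ ζ, ski n L p q ζ

lemma ski_mono_int (n L : ℝ) (hL : 0 ≤ L) (a b : ℕ) (h : ((a+b+1 : ℕ):ℝ) < 4*n+2) :
    Integrable (fun ζ : ℂ => ζ ^ a * (starRingEnd ℂ) ζ ^ b * ((ζ - (starRingEnd ℂ) ζ) * (wfun n L ζ : ℂ))) := by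
  have h1 := mono_int n L hL (a+1) b (by push_cast at h ⊢; linarith)
  have h2 := mono_int n L hL a (b+1) (by push_cast at h ⊢; linarith)
  refine (h1.sub h2).congr (Eventually.of_forall fun ζ => ?_)
  simp only [Pi.sub_apply]
  ring

lemma ski_int (n L : ℝ) (hL : 0 ≤ L) (p q : Polynomial ℂ)
    (h : ((p.natDegree+q.natDegree+1 : ℕ):ℝ) < 4*n+2) : Integrable (ski n L p q) := by
  have : ski n L p q = fun ζ => ∑ i ∈ range (p.natDegree+1), ∑ j ∈ range (q.natDegree+1),
      (p.coeff i * q.coeff j) *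
        (ζ ^ i * (starRingEnd ℂ) ζ ^ j * ((ζ - (starRingEnd ℂ) ζ) * (wfun n L ζ : ℂ))) := by
    ext ζ
    rw [ski, Polynomial.eval_eq_sum_range, Polynomial.eval_eq_sum_range, Finset.sum_mul_sum, Finset.sum_mul]
    refine Finset.sum_congr rfl fun i _ => ?_
    rw [Finset.sum_mul]
    refine Finset.sum_congr rfl fun j _ => ?_
    ring
  rw [this]
  refine integrable_finsetSum _ fun i hi => integrable_finsetSum _ fun j hj => ?_
  refine (ski_mono_int n L hL i j (lt_of_le_of_lt ?_ h)).const_mul _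
  rw [Finset.mem_range] at hi hj
  exact_mod_cast (by omega)

lemma sk_anti (n L : ℝ) (p q : Polynomial ℂ) : sk n L p q = - sk n L q p := by
  have hmp := Complex.conjLIE.measurePreserving.integral_comp'
    (f := Complex.conjLIE.toHomeomorph.toMeasurableEquiv) (ski n L q p)
  rw [sk, sk, ← hmp, ← integral_neg]
  congr 1
  ext ζ
  have : Complex.conjLIE.toHomeomorph.toMeasurableEquiv ζ = (starRingEnd ℂ) ζ := rfl
  rw [this, ski, ski]
  have hw : wfun n L ((starRingEnd ℂ) ζ) = wfun n L ζ := by unfold wfun; rw [Complex.norm_conj]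
  rw [hw, Complex.conj_conj]
  ring

lemma sk_parity (n L : ℝ) (p q : Polynomial ℂ) (s : ℂ) (hs : s * s = 1)
    (hp : ∀ z, p.eval (-z) = s * p.eval z) (hq : ∀ z, q.eval (-z) = s * q.eval z) :
    sk n L p q = 0 := by
  have h1 : ∀ ζ, ski n L p q (-ζ) = - ski n L p q ζ := by
    intro ζ
    have hw : wfun n L (-ζ) = wfun n L ζ := by unfold wfun; rw [norm_neg]
    rw [ski, ski, hw, map_neg, hp, hq]
    linear_combination (-(p.eval ζ * q.eval ((starRingEnd ℂ) ζ) *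
      ((ζ - (starRingEnd ℂ) ζ) * (wfun n L ζ : ℂ)))) * hs
  have h2 := integral_neg_eq_self (ski n L p q) volume
  simp only [h1] at h2
  rw [integral_neg] at h2
  have h3 : (2:ℂ) * ∫ ζ, ski n L p q ζ = 0 := by linear_combination -h2
  rw [sk]
  simpa using h3

lemma sk_X (n L : ℝ) (hL : 0 ≤ L) (a b : ℕ) (h : ((a+b+1 : ℕ):ℝ) < 4*n+2) :
    sk n L (Polynomial.X ^ a) (Polynomial.X ^ b) =
      (if a + 1 = b then (Real.pi * hh n L b : ℂ) else 0) - (if a = b + 1 then (Real.pi * hh n L a : ℂ) else 0) := by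
  have h1 := mono_int n L hL (a+1) b (by push_cast at h ⊢; linarith)
  have h2 := mono_int n L hL a (b+1) (by push_cast at h ⊢; linarith)
  have e : sk n L (Polynomial.X ^ a) (Polynomial.X ^ b) =
      (∫ ζ : ℂ, ζ ^ (a+1) * (starRingEnd ℂ) ζ ^ b * (wfun n L ζ : ℂ)) -
      ∫ ζ : ℂ, ζ ^ a * (starRingEnd ℂ) ζ ^ (b+1) * (wfun n L ζ : ℂ) := by
    rw [← integral_sub h1 h2, sk]
    congr 1
    ext ζ
    simp only [ski, Polynomial.eval_pow, Polynomial.eval_X]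
    ring
  rw [e]
  congr 1
  · split_ifs with hab
    · subst hab
      exact mono_diag n L hL _ (by push_cast at h ⊢; linarith)
    · exact mono_off n L _ _ hab
  · split_ifs with hab
    · subst hab
      exact mono_diag n L hL _ (by push_cast at h ⊢; linarith)
    · exact mono_off n L _ _ hab

/-- Recurrence coefficients. -/
def cc (n L : ℝ) (k : ℕ) : ℝ := hh n L (2*k+2) / hh n L (2*k+1)

/-- The even skew-orthogonal polynomials. -/
def Q (n L : ℝ) : ℕ → Polynomial ℂ
  | 0 => 1
  | k+1 => Polynomial.X ^ (2*k+2) + Polynomial.C (cc n L k : ℂ) * Q n L k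

lemma Q_deg_le (n L : ℝ) (k : ℕ) : (Q n L k).natDegree ≤ 2*k := by
  induction k with
  | zero => simp [Q]
  | succ k ih =>
    rw [Q]
    refine (Polynomial.natDegree_add_le _ _).trans (max_le ?_ ?_)
    · simp [mul_add]
    · exact (Polynomial.natDegree_C_mul_le _ _).trans (ih.trans (by omega))

lemma Q_monic (n L : ℝ) (k : ℕ) : (Q n L k).Monic ∧ (Q n L k).natDegree = 2*k := by
  cases k with
  | zero => simp [Q]
  | succ k =>
    have h : (Polynomial.C (cc n L k : ℂ) * Q n L k).natDegree < 2*k+2 :=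
      lt_of_le_of_lt ((Polynomial.natDegree_C_mul_le _ _).trans (Q_deg_le n L k)) (by omega)
    have hm : (Q n L (k+1)).Monic := by
      rw [Q]
      apply Polynomial.monic_X_pow_add
      exact lt_of_le_of_lt Polynomial.degree_le_natDegree (by exact_mod_cast h)
    refine ⟨hm, le_antisymm (Q_deg_le n L _) ?_⟩
    apply Polynomial.le_natDegree_of_ne_zero
    rw [Q, Polynomial.coeff_add, show 2 * (k+1) = 2*k+2 by ring, Polynomial.coeff_eq_zero_of_natDegree_lt h]
    simp

lemma Q_even (n L : ℝ) (k : ℕ) (z : ℂ) : (Q n L k).eval (-z) = (Q n L k).eval z := by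
  induction k with
  | zero => simp [Q]
  | succ k ih =>
    simp only [Q, Polynomial.eval_add, Polynomial.eval_mul, Polynomial.eval_pow, Polynomial.eval_X,
      Polynomial.eval_C, ih]
    rw [Even.neg_pow (by use k+1; ring)]

lemma Q_eval (n L : ℝ) (k : ℕ) (z : ℂ) :
    (Q n L k).eval z = ∑ l ∈ range (k+1), ((∏ t ∈ Ico l k, cc n L t : ℝ) : ℂ) * z ^ (2*l) := by
  induction k with
  | zero => simp [Q]
  | succ k ih =>
    rw [Finset.sum_range_succ, Q]
    simp only [Polynomial.eval_add, Polynomial.eval_mul, Polynomial.eval_pow, Polynomial.eval_X,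
      Polynomial.eval_C, ih]
    rw [Finset.mul_sum, add_comm]
    congr 1
    · refine Finset.sum_congr rfl fun l hl => ?_
      rw [Finset.prod_Ico_succ_top (by rw [Finset.mem_range] at hl; omega)]
      push_cast
      ring
    · simp [mul_add]

lemma hh_pos (n L : ℝ) (hL : 0 ≤ L) (k : ℕ) (h : (k:ℝ) < 2*n+1) : 0 < hh n L k :=
  ProbabilityTheory.beta_pos (by positivity) (by linarith)

lemma sk_QX (n L : ℝ) (hL : 0 ≤ L) (k k' : ℕ) (hk : (k:ℝ) + 1 ≤ n) (hk' : (k':ℝ) + 1 ≤ n) :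
    sk n L (Q n L k) (Polynomial.X ^ (2*k'+1)) =
      if k = k' then (Real.pi * hh n L (2*k+1) : ℂ) else 0 := by
  induction k with
  | zero =>
    rw [Q, ← pow_zero Polynomial.X, sk_X n L hL _ _ (by push_cast; linarith)]
    rw [if_neg (by omega : ¬ (0 = 2*k'+1+1)), sub_zero]
    by_cases h : k' = 0
    · subst h; simp
    · rw [if_neg (by omega), if_neg (by omega)]
  | succ k ih =>
    push_cast at hk
    have ih' := ih (by linarith)
    have i1 : Integrable (ski n L (Polynomial.X ^ (2*k+2)) (Polynomial.X ^ (2*k'+1))) := by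
      apply ski_int n L hL
      simp only [Polynomial.natDegree_X_pow]
      push_cast; linarith
    have i2 : Integrable (ski n L (Q n L k) (Polynomial.X ^ (2*k'+1))) := by
      apply ski_int n L hL
      simp only [Polynomial.natDegree_X_pow, (Q_monic n L k).2]
      push_cast; linarith
    have e : sk n L (Q n L (k+1)) (Polynomial.X ^ (2*k'+1)) =
        sk n L (Polynomial.X ^ (2*k+2)) (Polynomial.X ^ (2*k'+1)) +
          (cc n L k : ℂ) * sk n L (Q n L k) (Polynomial.X ^ (2*k'+1)) := by
      simp only [sk]
      rw [← integral_const_mul, ← integral_add i1 (i2.const_mul _)]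
      congr 1
      ext ζ
      simp only [ski, Q, Polynomial.eval_add, Polynomial.eval_mul, Polynomial.eval_C]
      ring
    rw [e, ih', sk_X n L hL _ _ (by push_cast; linarith)]
    have hpos := hh_pos n L hL (2*k+1) (by push_cast; linarith)
    by_cases h1 : k = k'
    · subst h1
      rw [if_neg (by omega), if_pos (by omega), if_pos rfl, if_neg (by omega), cc]
      have : (hh n L (2*k+1) : ℂ) ≠ 0 := by exact_mod_cast hpos.ne'
      push_cast
      field_simp
      ring
    · by_cases h2 : k + 1 = k'
      · subst h2
        rw [if_pos (by omega), if_neg (by omega), if_neg (by omega), if_pos rfl]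
        simp
      · rw [if_neg (by omega), if_neg (by omega), if_neg h1, if_neg h2]
        simp

/-- All skew-orthogonal polynomials. -/
def PP (n L : ℝ) (i : ℕ) : Polynomial ℂ :=
  if i % 2 = 0 then Q n L (i/2) else Polynomial.X ^ i

lemma PP_even (n L : ℝ) (k : ℕ) : PP n L (2*k) = Q n L k := by
  rw [PP, if_pos (by omega)]; congr 1; omega

lemma PP_odd (n L : ℝ) (k : ℕ) : PP n L (2*k+1) = Polynomial.X ^ (2*k+1) := by
  rw [PP, if_neg (by omega)]

lemma PP_monic (n L : ℝ) (i : ℕ) : (PP n L i).Monic ∧ (PP n L i).natDegree = i := by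
  rcases Nat.even_or_odd' i with ⟨k, h | h⟩
  · rw [h, PP_even]; exact Q_monic n L k
  · rw [h, PP_odd]; exact ⟨Polynomial.monic_X_pow _, by simp⟩

lemma R1_eq (N : ℕ) (hN : 0 < N) (n L : ℝ) (hL : 0 ≤ L) (hn : (N:ℝ) ≤ n) (ζ : ℂ) :
    ((R1 N n L ζ : ℝ) : ℂ) = (1/2) * ((ζ - (starRingEnd ℂ) ζ) * (wfun n L ζ : ℂ)) *
      ∑ k ∈ range N, ((Q n L k).eval ζ * (starRingEnd ℂ) ζ ^ (2*k+1)
        - ζ ^ (2*k+1) * (Q n L k).eval ((starRingEnd ℂ) ζ)) / (hh n L (2*k+1) : ℂ) := by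
  obtain ⟨M, rfl⟩ : ∃ M, N = M + 1 := ⟨N-1, by omega⟩
  push_cast at hn
  set PPP : Fin (M+1) × Fin 2 → Polynomial ℂ := fun p => PP n L (2 * p.1 + p.2) with hPPP
  set r : Fin (M+1) → ℂ := fun k => (Real.pi * hh n L (2*k+1) : ℂ) with hr
  have hk : ∀ k : Fin (M+1), ((k:ℕ):ℝ) + 1 ≤ n := by
    intro k
    have : ((k:ℕ):ℝ) ≤ M := by exact_mod_cast (by omega : (k:ℕ) ≤ M)
    linarith
  have hpi : (Real.pi : ℂ) ≠ 0 := by exact_mod_cast Real.pi_ne_zero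
  have hhne : ∀ k : Fin (M+1), (hh n L (2*k+1) : ℂ) ≠ 0 := by
    intro k
    exact_mod_cast (hh_pos n L hL _ (by have := hk k; push_cast; linarith)).ne'
  have hr0 : ∀ k, r k ≠ 0 := fun k => mul_ne_zero hpi (hhne k)
  have p0 : ∀ k : Fin (M+1), PPP (k, 0) = Q n L k := fun k => by
    simp only [hPPP]; exact PP_even n L k
  have p1 : ∀ k : Fin (M+1), PPP (k, 1) = Polynomial.X ^ (2*(k:ℕ)+1) := fun k => by
    simp only [hPPP]; exact PP_odd n L k
  set B : Fin (M+1) × Fin 2 → Fin (M+1) × Fin 2 → ℂ := fun p q => sk n L (PPP p) (PPP q) with hB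
  have b00 : ∀ k k', B (k,0) (k',0) = 0 := by
    intro k k'
    simp only [hB, p0]
    exact sk_parity n L _ _ 1 (by ring) (by simp [Q_even]) (by simp [Q_even])
  have b11 : ∀ k k', B (k,1) (k',1) = 0 := by
    intro k k'
    simp only [hB, p1]
    refine sk_parity n L _ _ (-1) (by ring) ?_ ?_ <;>
    · intro z
      simp only [Polynomial.eval_pow, Polynomial.eval_X]
      rw [Odd.neg_pow (by simp)]; ring
  have b01 : ∀ k k', B (k,0) (k',1) = if k = k' then r k else 0 := by
    intro k k'
    simp only [hB, p0, p1]
    rw [sk_QX n L hL _ _ (hk k) (hk k')]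
    simp only [hr, Fin.val_inj]
  have b10 : ∀ k k', B (k,1) (k',0) = if k = k' then - r k else 0 := by
    intro k k'
    have : B (k,1) (k',0) = - B (k',0) (k,1) := sk_anti _ _ _ _
    rw [this, b01]
    by_cases h : k = k'
    · subst h; simp
    · rw [if_neg h, if_neg (Ne.symm h)]; simp
  have hB0 : ∀ p q, p.1 ≠ q.1 → B p q = 0 := by
    rintro ⟨k, e⟩ ⟨k', e'⟩ hne
    simp only at hne
    fin_cases e <;> fin_cases e'
    · exact b00 k k'
    · exact (b01 k k').trans (if_neg hne)
    · exact (b10 k k').trans (if_neg hne)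
    · exact b11 k k'
  have hB1 : ∀ k (e : Equiv.Perm (Fin 2)), B (k, e 0) (k, e 1) = ((Equiv.Perm.sign e : ℤ) : ℂ) * r k := by
    intro k e
    have : ∀ e : Equiv.Perm (Fin 2), e = 1 ∨ e = Equiv.swap 0 1 := by decide
    rcases this e with h | h
    · subst h; simp [b01]
    · subst h; rw [Equiv.Perm.sign_swap (by decide)]; simp [b10]
  have hint : ∀ p q, Integrable (ski n L (PPP p) (PPP q)) := by
    intro p q
    apply ski_int n L hL
    simp only [hPPP, (PP_monic n L _).2]
    have h1 := hk p.1
    have h2 := hk q.1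
    have h3 : ((p.2:ℕ):ℝ) ≤ 1 := by exact_mod_cast (by omega : (p.2:ℕ) ≤ 1)
    have h4 : ((q.2:ℕ):ℝ) ≤ 1 := by exact_mod_cast (by omega : (q.2:ℕ) ≤ 1)
    push_cast
    linarith
  have hjd : ∀ m (ζs : Fin (M+1) → ℂ), m = M+1 → ((jointDen (M+1) n L ζs : ℝ) : ℂ) =
      ∑ σ : Equiv.Perm (Fin (M+1) × Fin 2), ((Equiv.Perm.sign σ : ℤ) : ℂ) *
        ∏ j : Fin (M+1), ski n L (PPP (σ (j,0))) (PPP (σ (j,1))) (ζs j) := by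
    intro _ ζs _
    exact jointDen_eq (M+1) n L (PP n L) (fun i => (PP_monic n L i).2) (fun i => (PP_monic n L i).1) ζs
  -- the normalisation
  have hZ : ((∫ ζs : Fin (M+1) → ℂ, jointDen (M+1) n L ζs : ℝ) : ℂ) =
      (M.factorial : ℂ) * 2 ^ M * (∏ k, r k) * (2 * (M+1)) := by
    rw [← integral_complex_ofReal]
    simp only [hjd (M+1) _ rfl]
    rw [integral_finsetSum]
    · simp only [integral_const_mul]
      have : ∀ σ : Equiv.Perm (Fin (M+1) × Fin 2),
        ∫ ζs : Fin (M+1) → ℂ, ∏ j : Fin (M+1), ski n L (PPP (σ (j,0))) (PPP (σ (j,1))) (ζs j)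
          = B (σ (0,0)) (σ (0,1)) * ∏ j : Fin M, B (σ (j.succ, 0)) (σ (j.succ, 1)) := by
        intro σ
        rw [integral_fintype_prod_volume_eq_prod (fun j => ski n L (PPP (σ (j,0))) (PPP (σ (j,1)))),
          Fin.prod_univ_succ]
        rfl
      simp only [this]
      rw [comb M r hr0 B hB0 hB1 B]
      congr 1
      rw [Finset.sum_congr rfl (g := fun _ => (2:ℂ))]
      · simp; ring
      · intro k _
        rw [b01, b10, if_pos rfl, if_pos rfl]
        field_simp [hr0 k]
        ring
    · intro σ _
      exact (Integrable.fintype_prod (fun j => hint _ _)).const_mul _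
  have hI : ((∫ ζs : Fin M → ℂ, jointDen (M+1) n L (Fin.cons ζ ζs) : ℝ) : ℂ) =
      (M.factorial : ℂ) * 2 ^ M * (∏ k, r k) * ∑ k, (ski n L (PPP (k,0)) (PPP (k,1)) ζ -
        ski n L (PPP (k,1)) (PPP (k,0)) ζ) / r k := by
    rw [← integral_complex_ofReal]
    simp only [hjd (M+1) _ rfl]
    simp only [Fin.prod_univ_succ, Fin.cons_zero, Fin.cons_succ]
    rw [integral_finsetSum]
    · simp only [integral_const_mul]
      have : ∀ σ : Equiv.Perm (Fin (M+1) × Fin 2),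
        ∫ ζs : Fin M → ℂ, ∏ j : Fin M, ski n L (PPP (σ (j.succ,0))) (PPP (σ (j.succ,1))) (ζs j)
          = ∏ j : Fin M, B (σ (j.succ, 0)) (σ (j.succ, 1)) := by
        intro σ
        rw [integral_fintype_prod_volume_eq_prod (fun j : Fin M => ski n L (PPP (σ (j.succ,0))) (PPP (σ (j.succ,1))))]
        rfl
      simp only [this]
      rw [comb M r hr0 B hB0 hB1 (fun p q => ski n L (PPP p) (PPP q) ζ), Fin.prod_univ_succ]
    · intro σ _
      exact ((Integrable.fintype_prod (fun j => hint _ _)).const_mul _).const_mul _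
  have hR : ((R1 (M+1) n L ζ : ℝ) : ℂ) = ((M:ℂ)+1) * ((Real.pi:ℂ)⁻¹ ^ (M+1) *
      ((∫ ζs : Fin (M+1) → ℂ, jointDen (M+1) n L ζs : ℝ) : ℂ))⁻¹ * (Real.pi:ℂ)⁻¹ ^ M *
      ((∫ ζs : Fin M → ℂ, jointDen (M+1) n L (Fin.cons ζ ζs) : ℝ) : ℂ) := by
    rw [R1, ZN]
    push_cast
    rfl
  rw [hR, hZ, hI]
  have hsum : ∑ k : Fin (M+1), (ski n L (PPP (k,0)) (PPP (k,1)) ζ -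
        ski n L (PPP (k,1)) (PPP (k,0)) ζ) / r k =
      (Real.pi:ℂ)⁻¹ * (((ζ - (starRingEnd ℂ) ζ) * (wfun n L ζ : ℂ)) *
      ∑ k ∈ range (M+1), ((Q n L k).eval ζ * (starRingEnd ℂ) ζ ^ (2*k+1)
        - ζ ^ (2*k+1) * (Q n L k).eval ((starRingEnd ℂ) ζ)) / (hh n L (2*k+1) : ℂ)) := by
    rw [← Fin.sum_univ_eq_sum_range (fun k => ((Q n L k).eval ζ * (starRingEnd ℂ) ζ ^ (2*k+1)
        - ζ ^ (2*k+1) * (Q n L k).eval ((starRingEnd ℂ) ζ)) / (hh n L (2*k+1) : ℂ)), Finset.mul_sum, Finset.mul_sum]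
    refine Finset.sum_congr rfl fun k _ => ?_
    rw [p0, p1]
    simp only [ski, hr, Polynomial.eval_pow, Polynomial.eval_X]
    have := hhne k
    field_simp
  rw [hsum]
  have hprod : (∏ k, r k) ≠ 0 := Finset.prod_ne_zero_iff.mpr fun k _ => hr0 k
  have hfac : (M.factorial : ℂ) ≠ 0 := by exact_mod_cast M.factorial_ne_zero
  have hM : (M:ℂ) + 1 ≠ 0 := by exact_mod_cast M.succ_ne_zero
  generalize (∑ k ∈ range (M+1), ((Q n L k).eval ζ * (starRingEnd ℂ) ζ ^ (2*k+1)
        - ζ ^ (2*k+1) * (Q n L k).eval ((starRingEnd ℂ) ζ)) / (hh n L (2*k+1) : ℂ)) = S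
  field_simp
  rw [pow_succ]
  field_simp

lemma gam_le (x s : ℝ) (hx : 0 < x) (hs : 0 ≤ s) (hs1 : s ≤ 1) :
    Real.Gamma (x+s) ≤ x ^ s * Real.Gamma x := by
  rcases hs.eq_or_lt with h | h
  · subst h; simp
  rcases hs1.eq_or_lt with h1 | h1
  · subst h1; rw [Real.Gamma_add_one hx.ne', Real.rpow_one]
  have := Real.Gamma_mul_add_mul_le_rpow_Gamma_mul_rpow_Gamma hx (by linarith : 0 < x+1)
    (by linarith : 0 < 1 - s) h (by ring)
  rw [show (1-s)*x + s*(x+1) = x+s by ring, Real.Gamma_add_one hx.ne',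
    Real.mul_rpow hx.le (Real.Gamma_pos_of_pos hx).le] at this
  refine this.trans (le_of_eq ?_)
  have hg := Real.Gamma_pos_of_pos hx
  calc _ = x ^ s * (Real.Gamma x ^ (1-s) * Real.Gamma x ^ s) := by ring
    _ = _ := by rw [← Real.rpow_add hg]; simp

lemma gam_ge (x s : ℝ) (hx : 0 < x) (hs : 0 ≤ s) (hs1 : s ≤ 1) :
    x * Real.Gamma x ≤ (x+s) ^ (1-s) * Real.Gamma (x+s) := by
  have := gam_le (x+s) (1-s) (by linarith) (by linarith) (by linarith)
  rwa [show x + s + (1-s) = x+1 by ring, Real.Gamma_add_one hx.ne'] at this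

lemma gam_bound (x s : ℝ) (hx : 0 < x) (hs : 0 ≤ s) :
    Real.Gamma (x+s) ≤ (x+s) ^ s * Real.Gamma x := by
  have key : ∀ m : ℕ, ∀ s : ℝ, 0 ≤ s → s ≤ 1 →
      Real.Gamma (x+(s+m)) ≤ (x+(s+m)) ^ (s+m) * Real.Gamma x := by
    intro m
    induction m with
    | zero =>
      intro s hs hs1
      simp only [Nat.cast_zero, add_zero]
      refine (gam_le x s hx hs hs1).trans ?_
      have := (Real.Gamma_pos_of_pos hx).le
      gcongr
      linarith
    | succ m ih =>
      intro s hs hs1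
      have h0 : 0 < x + (s+m) := by positivity
      push_cast
      rw [show x + (s + ((m:ℝ)+1)) = (x+(s+m)) + 1 by ring, Real.Gamma_add_one h0.ne',
        show s + ((m:ℝ)+1) = (s+m)+1 by ring, Real.rpow_add_one (by positivity)]
      have hg := (Real.Gamma_pos_of_pos hx).le
      calc _ ≤ (x+(s+m)) * ((x+(s+m)) ^ (s+m) * Real.Gamma x) := by gcongr; exact ih s hs hs1
        _ ≤ (x+(s+m)+1) * ((x+(s+m)+1) ^ (s+m) * Real.Gamma x) := by
            exact mul_le_mul (by linarith) (mul_le_mul_of_nonneg_right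
              (Real.rpow_le_rpow h0.le (by linarith) (by positivity)) hg) (by positivity) (by positivity)
        _ = _ := by ring
  have := key ⌊s⌋₊ (s - ⌊s⌋₊) (sub_nonneg.mpr (Nat.floor_le hs)) (by linarith [Nat.lt_floor_add_one s])
  simpa using this

lemma gam_tendsto (s : ℝ) (hs : 0 ≤ s) :
    Tendsto (fun x : ℝ => Real.Gamma (x+s) / (x ^ s * Real.Gamma x)) atTop (nhds 1) := by
  have hdiv : ∀ s : ℝ, Tendsto (fun x : ℝ => (x+s)/x) atTop (nhds 1) := by
    intro s
    have h : Tendsto (fun x : ℝ => 1 + s / x) atTop (nhds (1 + 0)) :=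
      (tendsto_const_nhds).add (tendsto_const_nhds.div_atTop tendsto_id)
    rw [add_zero] at h
    refine h.congr' ?_
    filter_upwards [eventually_gt_atTop 0] with x hx
    field_simp
  have key : ∀ m : ℕ, ∀ s : ℝ, 0 ≤ s → s ≤ 1 →
      Tendsto (fun x : ℝ => Real.Gamma (x+(s+m)) / (x ^ (s+m) * Real.Gamma x)) atTop (nhds 1) := by
    intro m
    induction m with
    | zero =>
      intro s hs hs1
      simp only [Nat.cast_zero, add_zero]
      have hlow : Tendsto (fun x : ℝ => ((x+s)/x) ^ (-(1-s))) atTop (nhds 1) := by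
        have := (hdiv s).rpow_const (p := -(1-s)) (Or.inl one_ne_zero)
        simpa using this
      refine tendsto_of_tendsto_of_tendsto_of_le_of_le' hlow tendsto_const_nhds ?_ ?_
      · filter_upwards [eventually_gt_atTop 0] with x hx
        have hg := Real.Gamma_pos_of_pos hx
        have h1 := gam_ge x s hx hs hs1
        have hxs : 0 < x + s := by linarith
        rw [le_div_iff₀ (by positivity), Real.rpow_neg (by positivity), Real.div_rpow hxs.le hx.le, inv_div,
          div_mul_eq_mul_div, div_le_iff₀ (by positivity)]
        calc x ^ (1-s) * (x ^ s * Real.Gamma x) = (x ^ (1-s) * x ^ s) * Real.Gamma x := by ring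
          _ = x * Real.Gamma x := by rw [← Real.rpow_add hx]; simp
          _ ≤ _ := by rw [mul_comm (Real.Gamma (x+s))]; exact h1
      · filter_upwards [eventually_gt_atTop 0] with x hx
        have hg := Real.Gamma_pos_of_pos hx
        rw [div_le_one (by positivity)]
        exact gam_le x s hx hs hs1
    | succ m ih =>
      intro s hs hs1
      have := (ih s hs hs1).mul (hdiv (s+m))
      rw [one_mul] at this
      refine this.congr' ?_
      filter_upwards [eventually_gt_atTop 0] with x hx
      have hg := Real.Gamma_pos_of_pos hx
      have h0 : 0 < x + (s+m) := by positivity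
      push_cast
      rw [show x + (s + ((m:ℝ)+1)) = (x+(s+m)) + 1 by ring, Real.Gamma_add_one h0.ne',
        show s + ((m:ℝ)+1) = (s+m)+1 by ring, Real.rpow_add_one hx.ne']
      field_simp
  have := key ⌊s⌋₊ (s - ⌊s⌋₊) (sub_nonneg.mpr (Nat.floor_le hs)) (by linarith [Nat.lt_floor_add_one s])
  simpa using this

/-- Scaled coefficients. -/
def ac (n L : ℝ) (p : ℕ × ℕ) : ℝ :=
  (n+L) ^ (-(2*L+2+p.1+2*p.2)) * ((∏ t ∈ Ico p.2 (p.1+p.2), cc n L t) / hh n L (2*(p.1+p.2)+1))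

/-- Universal constant part. -/
def uu (L : ℝ) (p : ℕ × ℕ) : ℝ :=
  (∏ t ∈ Ico p.2 (p.1+p.2), (2*(t:ℝ)+2+2*L)) / Real.Gamma (2*((p.1:ℝ)+p.2)+2*L+2)

lemma cc_eq (n L : ℝ) (hL : 0 ≤ L) (t : ℕ) (h : 2*(t:ℝ)+1 < 2*n) :
    cc n L t = (2*(t:ℝ)+2+2*L) / (2*n-1-2*t) := by
  have h1 := hh_pos n L hL (2*t+1) (by push_cast; linarith)
  rw [cc, div_eq_div_iff h1.ne' (by linarith)]
  simp only [hh, ProbabilityTheory.beta]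
  push_cast
  rw [show 2*(t:ℝ)+2+2*L+1 = (2*(t:ℝ)+1+2*L+1) + 1 by ring,
    show 2*n+1-(2*(t:ℝ)+1) = (2*n+1-(2*(t:ℝ)+2)) + 1 by ring,
    Real.Gamma_add_one (by positivity : 2*(t:ℝ)+1+2*L+1 ≠ 0), Real.Gamma_add_one (by linarith : 2*n+1-(2*(t:ℝ)+2) ≠ 0),
    show (2*(t:ℝ)+1+2*L+1) + 1 + (2*n+1-(2*(t:ℝ)+2)) = 2*(t:ℝ)+1+2*L+1 + (2*n+1-(2*(t:ℝ)+2) + 1) by ring]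
  ring

lemma ac_eq (n L : ℝ) (hL : 0 ≤ L) (p : ℕ × ℕ) (h : (p.1:ℝ)+p.2+1 ≤ n) :
    ac n L p = (Real.Gamma ((2*n-2*(p.1+p.2)) + (2*L+2+2*(p.1+p.2))) /
        (Real.Gamma (2*n-2*(p.1+p.2)) * (n+L) ^ (2*L+2+2*((p.1:ℝ)+p.2)))) *
      (∏ t ∈ Ico p.2 (p.1+p.2), ((n+L)/(2*n-1-2*t))) * uu L p := by
  obtain ⟨i, j⟩ := p
  simp only at h ⊢
  have hm : 0 < n + L := by have : (0:ℝ) ≤ (i:ℝ)+j := by positivity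
                            linarith
  simp only [ac, uu]
  have e1 : ∀ t ∈ Ico j (i+j), cc n L t = (2*(t:ℝ)+2+2*L) * (((n+L)/(2*n-1-2*t)) * (n+L)⁻¹) := by
    intro t ht
    rw [Finset.mem_Ico] at ht
    have : (t:ℝ) + 1 ≤ (i:ℝ) + j := by exact_mod_cast ht.2
    rw [cc_eq n L hL t (by linarith)]
    field_simp
  rw [Finset.prod_congr rfl e1, Finset.prod_mul_distrib, Finset.prod_mul_distrib, Finset.prod_const, Nat.card_Ico,
    Nat.add_sub_cancel]
  have e2 : hh n L (2*(i+j)+1) = Real.Gamma (2*((i:ℝ)+j)+2*L+2) * Real.Gamma (2*n-2*((i:ℝ)+j)) /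
      Real.Gamma ((2*n-2*((i:ℝ)+j)) + (2*L+2+2*((i:ℝ)+j))) := by
    simp only [hh, ProbabilityTheory.beta]
    push_cast
    congr 2
    · congr 1; ring
    · congr 1; ring
    · ring
  rw [e2, show 2*L+2+2*((i:ℝ)+j) = (2*L+2+i+2*j) + (i:ℕ) by ring, Real.rpow_add hm, Real.rpow_natCast,
    Real.rpow_neg hm.le]
  have g1 : 0 < Real.Gamma (2*((i:ℝ)+j)+2*L+2) := Real.Gamma_pos_of_pos (by positivity)
  have g2 : 0 < Real.Gamma (2*n-2*((i:ℝ)+j)) := Real.Gamma_pos_of_pos (by linarith)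
  have g3 := Real.rpow_pos_of_pos hm (2*L+2+i+2*j)
  generalize (∏ t ∈ Ico j (i+j), ((n+L)/(2*n-1-2*(t:ℝ)))) = X
  rw [inv_pow]
  field_simp

/-- Limit coefficients. -/
def aL (L : ℝ) (p : ℕ × ℕ) : ℝ := 2 ^ (2*L+2+2*((p.1:ℝ)+p.2)) * (1/2)^p.1 * uu L p

/-- Truncated coefficients. -/
def aN (b L : ℝ) (N : ℕ) (p : ℕ × ℕ) : ℝ := if p.1+p.2 < N then ac ((b+1)*N) L p else 0

lemma ratio_tendsto (b L c : ℝ) (hb : 0 < b) :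
    Tendsto (fun N : ℕ => (2*((b+1)*N) - c) / ((b+1)*N+L)) atTop (nhds 2) := by
  have h1 : Tendsto (fun N : ℕ => (b+1)*(N:ℝ)+L) atTop atTop :=
    tendsto_atTop_add_const_right _ _ (tendsto_natCast_atTop_atTop.const_mul_atTop (by linarith))
  have h : Tendsto (fun N : ℕ => 2 - (2*L+c) / ((b+1)*(N:ℝ)+L)) atTop (nhds (2 - 0)) :=
    tendsto_const_nhds.sub (tendsto_const_nhds.div_atTop h1)
  rw [sub_zero] at h
  refine h.congr' ?_
  filter_upwards [h1.eventually_gt_atTop 0] with N hN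
  field_simp
  ring

lemma aN_tendsto (b L : ℝ) (hb : 0 < b) (hL : 0 ≤ L) (p : ℕ × ℕ) :
    Tendsto (fun N => aN b L N p) atTop (nhds (aL L p)) := by
  obtain ⟨i, j⟩ := p
  have hx : Tendsto (fun N : ℕ => 2*((b+1)*(N:ℝ)) - 2*((i:ℝ)+j)) atTop atTop :=
    tendsto_atTop_add_const_right _ _ ((tendsto_natCast_atTop_atTop.const_mul_atTop (by linarith)).const_mul_atTop (by norm_num))
  have h1 := (gam_tendsto (2*L+2+2*((i:ℝ)+j)) (by positivity)).comp hx
  have h2 := (ratio_tendsto b L (2*((i:ℝ)+j)) hb).rpow_const (p := 2*L+2+2*((i:ℝ)+j)) (Or.inl two_ne_zero)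
  have h3 : Tendsto (fun N : ℕ => ∏ t ∈ Ico j (i+j), (((b+1)*N+L)/(2*((b+1)*N)-1-2*t))) atTop
      (nhds (∏ t ∈ Ico j (i+j), (1/2 : ℝ))) := by
    refine tendsto_finsetProd _ fun t _ => ?_
    have := (ratio_tendsto b L (1+2*t) hb).inv₀ two_ne_zero
    rw [← one_div] at this
    refine this.congr fun N => ?_
    rw [inv_div]
    congr 1
    ring
  rw [Finset.prod_const, Nat.card_Ico, Nat.add_sub_cancel] at h3
  have h4 := ((h1.mul h2).mul h3).mul_const (uu L (i,j))
  rw [one_mul] at h4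
  refine h4.congr' ?_
  filter_upwards [eventually_gt_atTop (i+j), hx.eventually_gt_atTop 0] with N hN hN0
  have hNr : (i:ℝ)+j+1 ≤ N := by exact_mod_cast hN
  have hn : (i:ℝ)+j+1 ≤ (b+1)*N := by nlinarith [(Nat.cast_nonneg N : (0:ℝ) ≤ N)]
  have hm : 0 < (b+1)*(N:ℝ)+L := by have : (0:ℝ) ≤ (i:ℝ)+j := by positivity
                                    linarith
  rw [aN, if_pos hN, ac_eq _ L hL (i,j) hn]
  simp only [Function.comp]
  congr 2
  rw [Real.div_rpow hN0.le hm.le]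
  have g := Real.Gamma_pos_of_pos hN0
  have g3 := Real.rpow_pos_of_pos hm (2*L+2+2*((i:ℝ)+j))
  have g4 := Real.rpow_pos_of_pos hN0 (2*L+2+2*((i:ℝ)+j))
  generalize Real.Gamma (2*((b+1)*(N:ℝ)) - 2*((i:ℝ)+j)) = A at *
  generalize (2*((b+1)*(N:ℝ)) - 2*((i:ℝ)+j)) ^ (2*L+2+2*((i:ℝ)+j)) = B at *
  generalize ((b+1)*(N:ℝ)+L) ^ (2*L+2+2*((i:ℝ)+j)) = C at *
  field_simp

lemma uu_bound (L : ℝ) (hL : 0 ≤ L) (p : ℕ × ℕ) :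
    0 ≤ uu L p ∧ uu L p ≤ (Real.Gamma (2*L+2))⁻¹ * ((p.1.factorial : ℝ)⁻¹ * (p.2.factorial : ℝ)⁻¹) := by
  obtain ⟨i, j⟩ := p
  have hG0 : 0 < Real.Gamma (2*L+2) := Real.Gamma_pos_of_pos (by positivity)
  have key : ∀ k : ℕ, (∏ t ∈ range k, (2*(t:ℝ)+2+2*L)) * (k.factorial * Real.Gamma (2*L+2)) ≤
      Real.Gamma (2*(k:ℝ)+2*L+2) := by
    intro k
    induction k with
    | zero => simp
    | succ k ih =>
      rw [Finset.prod_range_succ, Nat.factorial_succ]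
      push_cast
      rw [show 2*((k:ℝ)+1)+2*L+2 = (2*(k:ℝ)+2*L+2)+1+1 by ring, Real.Gamma_add_one (by positivity),
        Real.Gamma_add_one (by positivity)]
      have hG : 0 < Real.Gamma (2*(k:ℝ)+2*L+2) := Real.Gamma_pos_of_pos (by positivity)
      calc _ = ((k:ℝ)+1) * ((2*(k:ℝ)+2*L+2) * ((∏ t ∈ range k, (2*(t:ℝ)+2+2*L)) * (k.factorial * Real.Gamma (2*L+2)))) := by ring
        _ ≤ (2*(k:ℝ)+2*L+2+1) * ((2*(k:ℝ)+2*L+2) * Real.Gamma (2*(k:ℝ)+2*L+2)) := by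
            have : (0:ℝ) ≤ ∏ t ∈ range k, (2*(t:ℝ)+2+2*L) := Finset.prod_nonneg fun t _ => by positivity
            gcongr
            linarith [(Nat.cast_nonneg k : (0:ℝ) ≤ k)]
  have hG : 0 < Real.Gamma (2*((i:ℝ)+j)+2*L+2) := Real.Gamma_pos_of_pos (by positivity)
  have hp : (0:ℝ) ≤ ∏ t ∈ Ico j (i+j), (2*(t:ℝ)+2+2*L) := Finset.prod_nonneg fun t _ => by positivity
  have h1 : ∏ t ∈ Ico j (i+j), (2*(t:ℝ)+2+2*L) ≤ ∏ t ∈ range (i+j), (2*(t:ℝ)+2+2*L) := by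
    rw [← Finset.prod_range_mul_prod_Ico _ (by omega : j ≤ i+j)]
    refine le_mul_of_one_le_left hp ?_
    calc (1:ℝ) = ∏ t ∈ range j, (1:ℝ) := by simp
      _ ≤ _ := Finset.prod_le_prod (fun _ _ => zero_le_one)
          fun t _ => by linarith [(Nat.cast_nonneg t : (0:ℝ) ≤ t)]
  have h2 : (i.factorial : ℝ) * j.factorial ≤ (i+j).factorial := by
    exact_mod_cast Nat.le_of_dvd (Nat.factorial_pos _) (Nat.factorial_mul_factorial_dvd_factorial_add i j)
  refine ⟨div_nonneg hp hG.le, ?_⟩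
  simp only [uu]
  have hk := key (i+j)
  push_cast at hk
  rw [div_le_iff₀ hG, ← mul_inv, ← mul_inv, inv_mul_eq_div, le_div_iff₀ (by positivity)]
  refine le_trans ?_ hk
  have : (0:ℝ) ≤ ∏ t ∈ range (i+j), (2*(t:ℝ)+2+2*L) := Finset.prod_nonneg fun t _ => by positivity
  rw [mul_comm (Real.Gamma _)]
  gcongr

/-- Constant in the domination. -/
def C0 (b L : ℝ) : ℝ := (b+1+L)/(2*b)

/-- The dominating sequence. -/
def bd (b L : ℝ) (p : ℕ × ℕ) : ℝ :=
  4 ^ (2*L+2+2*((p.1:ℝ)+p.2)) * C0 b L ^ p.1 *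
    ((Real.Gamma (2*L+2))⁻¹ * ((p.1.factorial : ℝ)⁻¹ * (p.2.factorial : ℝ)⁻¹))

lemma aN_bound (b L : ℝ) (hb : 0 < b) (hL : 0 ≤ L) (N : ℕ) (p : ℕ × ℕ) :
    |aN b L N p| ≤ bd b L p := by
  have hG0 : 0 < Real.Gamma (2*L+2) := Real.Gamma_pos_of_pos (by positivity)
  have hC : 0 < C0 b L := by unfold C0; positivity
  rw [aN]
  split_ifs with h
  swap
  · rw [abs_zero]; unfold bd; positivity
  obtain ⟨i, j⟩ := p
  simp only at h
  have hNr : (i:ℝ)+j+1 ≤ N := by exact_mod_cast h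
  have hij : (0:ℝ) ≤ (i:ℝ)+j := by positivity
  have hn : (N:ℝ) ≤ (b+1)*N := by nlinarith
  have hm : 1 ≤ (b+1)*(N:ℝ)+L := by linarith
  rw [ac_eq _ L hL (i,j) (by simp only; linarith)]
  simp only [bd]
  have hx : 0 < 2*((b+1)*(N:ℝ)) - 2*((i:ℝ)+j) := by linarith
  have g := Real.Gamma_pos_of_pos hx
  have gm := Real.rpow_pos_of_pos (by linarith : 0 < (b+1)*(N:ℝ)+L) (2*L+2+2*((i:ℝ)+j))
  have b1 : |Real.Gamma ((2*((b+1)*(N:ℝ))-2*((i:ℝ)+j)) + (2*L+2+2*((i:ℝ)+j))) /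
        (Real.Gamma (2*((b+1)*(N:ℝ))-2*((i:ℝ)+j)) * ((b+1)*(N:ℝ)+L) ^ (2*L+2+2*((i:ℝ)+j)))| ≤
        4 ^ (2*L+2+2*((i:ℝ)+j)) := by
    have g2 : 0 < Real.Gamma ((2*((b+1)*(N:ℝ))-2*((i:ℝ)+j)) + (2*L+2+2*((i:ℝ)+j))) :=
      Real.Gamma_pos_of_pos (by linarith)
    rw [abs_of_pos (by positivity), div_le_iff₀ (by positivity)]
    refine (gam_bound _ (2*L+2+2*((i:ℝ)+j)) hx (by positivity)).trans ?_
    have e := Real.mul_rpow (z := 2*L+2+2*((i:ℝ)+j)) (by norm_num : (0:ℝ) ≤ 4) (by linarith : 0 ≤ (b+1)*(N:ℝ)+L)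
    have e2 := Real.rpow_le_rpow (z := 2*L+2+2*((i:ℝ)+j))
      (by linarith : 0 ≤ 2*((b+1)*(N:ℝ))-2*((i:ℝ)+j) + (2*L+2+2*((i:ℝ)+j)))
      (by linarith : 2*((b+1)*(N:ℝ))-2*((i:ℝ)+j) + (2*L+2+2*((i:ℝ)+j)) ≤ 4 * ((b+1)*(N:ℝ)+L)) (by positivity)
    rw [e] at e2
    refine (mul_le_mul_of_nonneg_right e2 g.le).trans (le_of_eq ?_)
    ring
  have b2 : |∏ t ∈ Ico j (i+j), (((b+1)*(N:ℝ)+L)/(2*((b+1)*N)-1-2*t))| ≤ C0 b L ^ i := by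
    rw [Finset.abs_prod]
    have : C0 b L ^ i = ∏ t ∈ Ico j (i+j), C0 b L := by
      rw [Finset.prod_const, Nat.card_Ico, Nat.add_sub_cancel]
    rw [this]
    refine Finset.prod_le_prod (fun _ _ => abs_nonneg _) fun t ht => ?_
    rw [Finset.mem_Ico] at ht
    have ht' : (t:ℝ) + 1 ≤ (i:ℝ) + j := by exact_mod_cast ht.2
    have hd : 2*b*N ≤ 2*((b+1)*(N:ℝ))-1-2*t := by linarith
    have hN0 : 1 ≤ (N:ℝ) := by linarith
    have hd0 : 0 < 2*b*(N:ℝ) := by positivity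
    rw [abs_of_nonneg (div_nonneg (by linarith) (by linarith)), C0, div_le_div_iff₀ (by linarith) (by positivity)]
    have : (b+1)*(N:ℝ)+L ≤ (b+1+L)*N := by nlinarith
    calc ((b+1)*(N:ℝ)+L) * (2*b) ≤ ((b+1+L)*N) * (2*b) := by gcongr
      _ = (b+1+L) * (2*b*N) := by ring
      _ ≤ _ := by gcongr
  have b3 := uu_bound L hL (i,j)
  rw [abs_mul, abs_mul, abs_of_nonneg b3.1]
  exact mul_le_mul (mul_le_mul b1 b2 (abs_nonneg _) (by positivity)) b3.2 b3.1 (by positivity)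

lemma bd_nonneg (b L : ℝ) (hb : 0 < b) (hL : 0 ≤ L) (p : ℕ × ℕ) : 0 ≤ bd b L p :=
  (abs_nonneg _).trans (aN_bound b L hb hL 0 p)

lemma aL_bound (b L : ℝ) (hb : 0 < b) (hL : 0 ≤ L) (p : ℕ × ℕ) : |aL L p| ≤ bd b L p :=
  le_of_tendsto' (aN_tendsto b L hb hL p).abs fun N => aN_bound b L hb hL N p

lemma bd_summable (b L : ℝ) (hb : 0 < b) (hL : 0 ≤ L) (R : ℝ) (hR : 0 ≤ R) :
    Summable (fun p : ℕ × ℕ => bd b L p * (2 * R ^ (2*p.1+4*p.2+1))) := by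
  have hC : 0 < C0 b L := by unfold C0; positivity
  have h := (Real.summable_pow_div_factorial (16 * C0 b L * R^2)).mul_of_nonneg
    (Real.summable_pow_div_factorial (16 * R^4)) (fun i => by positivity) (fun j => by positivity)
  refine (h.mul_left (4 ^ (2*L+2) * (Real.Gamma (2*L+2))⁻¹ * (2*R))).congr fun p => ?_
  obtain ⟨i, j⟩ := p
  simp only [bd]
  rw [Real.rpow_add (by norm_num : (0:ℝ)<4) (2*L+2) (2*((i:ℝ)+j)), show (2*((i:ℝ)+j)) = ((2*(i+j) : ℕ) : ℝ) by push_cast; ring, Real.rpow_natCast,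
    pow_mul (4:ℝ)]
  norm_num
  rw [pow_add, pow_add, pow_add, mul_pow, mul_pow, mul_pow, pow_mul, pow_mul, pow_one, ← pow_mul, ← pow_mul]
  ring

lemma coeff_tendsto (b L : ℝ) (hb : 0 < b) (hL : 0 ≤ L) (R : ℝ) (hR : 0 ≤ R) :
    Tendsto (fun N : ℕ => ∑' p : ℕ × ℕ, |aN b L N p - aL L p| * (2 * R ^ (2*p.1+4*p.2+1))) atTop (nhds 0) := by
  have h := tendsto_tsum_of_dominated_convergence (𝓕 := atTop)
    (f := fun (N : ℕ) (p : ℕ × ℕ) => |aN b L N p - aL L p| * (2 * R ^ (2*p.1+4*p.2+1)))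
    (g := fun _ => (0:ℝ)) ((bd_summable b L hb hL R hR).mul_left 2) ?_ ?_
  · simpa using h
  · intro p
    have h1 := ((aN_tendsto b L hb hL p).sub_const (aL L p)).abs.mul_const (2 * R ^ (2*p.1+4*p.2+1))
    simpa using h1
  · refine Eventually.of_forall fun N p => ?_
    rw [Real.norm_of_nonneg (by positivity)]
    have hc : (0:ℝ) ≤ 2 * R ^ (2*p.1+4*p.2+1) := by positivity
    refine (mul_le_mul_of_nonneg_right (b := |aN b L N p - aL L p|) (c := 2 * bd b L p) ?_ hc).trans_eq (mul_assoc _ _ _)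
    have h1 := aN_bound b L hb hL N p
    have h2 := aL_bound b L hb hL p
    have h3 := abs_sub (aN b L N p) (aL L p)
    linarith

lemma beta_int (i : ℕ) : ∀ a : ℝ, 0 ≤ a → ∫ s in (0:ℝ)..1, s ^ a * (1-s^2)^i =
    (i.factorial : ℝ) * 2 ^ i / ∏ t ∈ range (i+1), (a+1+2*t) := by
  induction i with
  | zero =>
    intro a ha
    simp only [pow_zero, mul_one]
    rw [integral_rpow (Or.inl (by linarith))]
    simp [Real.zero_rpow (by linarith : a+1 ≠ 0)]
  | succ i ih =>
    intro a ha
    have hc : ∀ a : ℝ, 0 ≤ a → IntervalIntegrable (fun s : ℝ => s ^ a * (1-s^2)^i) volume 0 1 := by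
      intro a ha
      exact (((Real.continuous_rpow_const ha).mul (by fun_prop))).intervalIntegrable _ _
    have e : ∫ s in (0:ℝ)..1, s ^ a * (1-s^2)^(i+1) =
        ∫ s in (0:ℝ)..1, (s ^ a * (1-s^2)^i - s ^ (a+2) * (1-s^2)^i) := by
      refine intervalIntegral.integral_congr fun s hs => ?_
      rw [Set.uIcc_of_le zero_le_one] at hs
      rw [Real.rpow_add_of_nonneg hs.1 ha (by norm_num), Real.rpow_two]
      ring
    rw [e, intervalIntegral.integral_sub (hc a ha) (hc (a+2) (by linarith)), ih a ha, ih (a+2) (by linarith)]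
    have p1 : ∀ a : ℝ, 0 ≤ a → 0 < ∏ t ∈ range (i+1), (a+1+2*(t:ℝ)) :=
      fun a ha => Finset.prod_pos fun t _ => by positivity
    have h1 := p1 a ha
    have h2 := p1 (a+2) (by linarith)
    have q1 := Finset.prod_range_succ (fun t : ℕ => a+1+2*(t:ℝ)) (i+1)
    have q2 := Finset.prod_range_succ' (fun t : ℕ => a+1+2*(t:ℝ)) (i+1)
    have q3 : ∏ t ∈ range (i+1), (a+1+2*((t+1:ℕ):ℝ)) = ∏ t ∈ range (i+1), (a+2+1+2*(t:ℝ)) :=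
      Finset.prod_congr rfl fun t _ => by push_cast; ring
    rw [q3] at q2
    have h3 : 0 < a+1 := by linarith
    have h4 : 0 < a+1+2*((i:ℝ)+1) := by positivity
    rw [q1, Nat.factorial_succ]
    rw [q1] at q2
    push_cast at q2 ⊢
    generalize ∏ t ∈ range (i+1), (a+1+2*(t:ℝ)) = X at *
    generalize ∏ t ∈ range (i+1), (a+2+1+2*(t:ℝ)) = Y at *
    have hX : Y = X * (a+1+2*((i:ℝ)+1)) / (a+1) := by
      rw [q2]; field_simp; ring
    rw [hX]
    field_simp
    ring

lemma gam_prod (L : ℝ) (hL : 0 ≤ L) (i j : ℕ) :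
    Real.Gamma (2*((i:ℝ)+j)+2*L+2) = Real.Gamma (2*j+1+2*L) *
      (∏ t ∈ range (i+1), (2*L+2*j+1+2*(t:ℝ))) * ∏ t ∈ Ico j (i+j), (2*(t:ℝ)+2+2*L) := by
  induction i with
  | zero =>
    simp only [Nat.cast_zero, zero_add, Finset.prod_range_one, Finset.Ico_self, Finset.prod_empty, mul_one, mul_zero, add_zero]
    rw [show 2*(j:ℝ)+2*L+2 = (2*j+1+2*L)+1 by ring, Real.Gamma_add_one (by positivity)]
    ring
  | succ i ih =>
    rw [Finset.prod_range_succ, show i+1+j = (i+j)+1 by ring, Finset.prod_Ico_succ_top (by omega)]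
    push_cast
    rw [show 2*((i:ℝ)+1+j)+2*L+2 = (2*((i:ℝ)+j)+2*L+2)+1+1 by ring, Real.Gamma_add_one (by positivity),
      Real.Gamma_add_one (by positivity), ih]
    ring

lemma aL_eq (L : ℝ) (hL : 0 ≤ L) (i j : ℕ) :
    aL L (i,j) = 4 * 2^(2*L) * (4^j / (i.factorial * Real.Gamma (2*j+1+2*L))) *
      ∫ s in (0:ℝ)..1, s ^ (2*L+2*j) * (1-s^2)^i := by
  rw [beta_int i (2*L+2*j) (by positivity)]
  simp only [aL, uu]
  rw [gam_prod L hL i j]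
  have h1 : 0 < Real.Gamma (2*j+1+2*L) := Real.Gamma_pos_of_pos (by positivity)
  have h2 : 0 < ∏ t ∈ range (i+1), (2*L+2*j+1+2*(t:ℝ)) := Finset.prod_pos fun t _ => by positivity
  have h3 : 0 < ∏ t ∈ Ico j (i+j), (2*(t:ℝ)+2+2*L) := Finset.prod_pos fun t _ => by positivity
  have h4 : (2:ℝ)^(2*L+2+2*((i:ℝ)+j)) = 2^(2*L) * 4 * (2^i * 2^i) * 4^j := by
    rw [show 2*L+2+2*((i:ℝ)+j) = 2*L + ((2+2*(i+j) : ℕ):ℝ) by push_cast; ring,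
      Real.rpow_add (by norm_num), Real.rpow_natCast, pow_add, pow_mul, pow_add, ← mul_pow]
    norm_num
    ring
  rw [h4]
  generalize ∏ t ∈ range (i+1), (2*L+2*j+1+2*(t:ℝ)) = X at *
  generalize ∏ t ∈ Ico j (i+j), (2*(t:ℝ)+2+2*L) = Y at *
  have h5 : (i.factorial : ℝ) ≠ 0 := by positivity
  rw [div_pow, one_pow]
  field_simp

/-- Skew monomials. -/
def TT (z : ℂ) (p : ℕ × ℕ) : ℂ :=
  z^(2*p.2) * (starRingEnd ℂ z)^(2*(p.1+p.2)+1) - z^(2*(p.1+p.2)+1) * (starRingEnd ℂ z)^(2*p.2)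

/-- Generating series. -/
def SS (a : ℕ × ℕ → ℝ) (z : ℂ) : ℂ := ∑' p, (a p : ℂ) * TT z p

lemma TT_bound (z : ℂ) (R : ℝ) (hz : ‖z‖ ≤ R) (p : ℕ × ℕ) : ‖TT z p‖ ≤ 2 * R ^ (2*p.1+4*p.2+1) := by
  unfold TT
  refine (norm_sub_le _ _).trans ?_
  rw [norm_mul, norm_mul, norm_pow, norm_pow, norm_pow, norm_pow, RCLike.norm_conj, ← pow_add, ← pow_add,
    show 2*p.2 + (2*(p.1+p.2)+1) = 2*p.1+4*p.2+1 by ring, show (2*(p.1+p.2)+1)+2*p.2 = 2*p.1+4*p.2+1 by ring]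
  have := pow_le_pow_left₀ (norm_nonneg z) hz (2*p.1+4*p.2+1)
  linarith

lemma gam_fact (L : ℝ) (hL : 0 ≤ L) (j : ℕ) :
    Real.Gamma (2*L+1) * j.factorial ≤ Real.Gamma (2*j+1+2*L) := by
  induction j with
  | zero => simp [add_comm]
  | succ j ih =>
    have hG : 0 < Real.Gamma (2*L+1) := Real.Gamma_pos_of_pos (by positivity)
    have hG' : 0 < Real.Gamma (2*j+1+2*L) := Real.Gamma_pos_of_pos (by positivity)
    rw [Nat.factorial_succ]
    push_cast
    rw [show 2*((j:ℝ)+1)+1+2*L = (2*(j:ℝ)+1+2*L)+1+1 by ring,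
      Real.Gamma_add_one (by positivity : 2*(j:ℝ)+1+2*L+1 ≠ 0),
      Real.Gamma_add_one (by positivity : 2*(j:ℝ)+1+2*L ≠ 0)]
    have hj : (0:ℝ) ≤ j := Nat.cast_nonneg j
    calc _ = ((j:ℝ)+1) * (1 * (Real.Gamma (2*L+1) * j.factorial)) := by ring
      _ ≤ (2*(j:ℝ)+1+2*L+1) * ((2*(j:ℝ)+1+2*L) * Real.Gamma (2*(j:ℝ)+1+2*L)) := by
        refine mul_le_mul (by linarith) (mul_le_mul (by linarith) ih (by positivity) (by positivity))
          (by positivity) (by positivity)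

/-- Exponential part in the expansion of the integrand. -/
def FA (z : ℂ) (s : ℝ) (i : ℕ) : ℂ :=
  z * (((1-(s:ℂ)^2)*z^2)^i / i.factorial) -
    (starRingEnd ℂ z) * (((1-(s:ℂ)^2)*(starRingEnd ℂ z)^2)^i / i.factorial)

/-- Mittag-Leffler part in the expansion of the integrand. -/
def FB (L : ℝ) (z : ℂ) (s : ℝ) (j : ℕ) : ℝ :=
  ((2*s*‖z‖^2)^2)^j / Real.Gamma (2*j+1+2*L)

lemma FA_bound (z : ℂ) (s : ℝ) (h0 : 0 ≤ s) (h1 : s ≤ 1) (i : ℕ) :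
    ‖FA z s i‖ ≤ 2 * ‖z‖ * ((‖z‖^2)^i / i.factorial) := by
  have hs : ‖(1-(s:ℂ)^2)‖ ≤ 1 := by
    have : (1-(s:ℂ)^2) = ((1-s^2 : ℝ):ℂ) := by push_cast; ring
    rw [this, Complex.norm_real, Real.norm_eq_abs, abs_le]
    constructor <;> nlinarith
  have key : ∀ w : ℂ, ‖w‖ = ‖z‖ → ‖w * (((1-(s:ℂ)^2)*w^2)^i / i.factorial)‖ ≤ ‖z‖ * ((‖z‖^2)^i / i.factorial) := by
    intro w hw
    rw [norm_mul, norm_div, norm_pow, norm_mul, norm_pow, hw, Complex.norm_natCast]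
    have : ‖(1-(s:ℂ)^2)‖ * ‖z‖^2 ≤ ‖z‖^2 := mul_le_of_le_one_left (by positivity) hs
    gcongr
  refine (norm_sub_le _ _).trans ?_
  have k1 := key z rfl
  have k2 := key (starRingEnd ℂ z) (RCLike.norm_conj z)
  linarith

lemma FB_bound (L : ℝ) (hL : 0 ≤ L) (z : ℂ) (s : ℝ) (h0 : 0 ≤ s) (h1 : s ≤ 1) (j : ℕ) :
    ‖FB L z s j‖ ≤ (Real.Gamma (2*L+1))⁻¹ * (((2*‖z‖^2)^2)^j / j.factorial) := by
  have hG : 0 < Real.Gamma (2*L+1) := Real.Gamma_pos_of_pos (by positivity)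
  have hG' : 0 < Real.Gamma (2*j+1+2*L) := Real.Gamma_pos_of_pos (by positivity)
  have hf : (0:ℝ) < j.factorial := by positivity
  unfold FB
  rw [Real.norm_of_nonneg (by positivity), inv_mul_eq_div, div_div]
  have e : 2*s*‖z‖^2 ≤ 2*‖z‖^2 := by nlinarith [sq_nonneg ‖z‖]
  have := gam_fact L hL j
  rw [mul_comm] at this
  gcongr

lemma exp_hasSum (w : ℂ) : HasSum (fun i : ℕ => w^i / (i.factorial:ℂ)) (Complex.exp w) := by
  rw [Complex.exp_eq_exp_ℂ]
  exact NormedSpace.expSeries_div_hasSum_exp w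

lemma FA_hasSum (z : ℂ) (s : ℝ) :
    HasSum (FA z s) (z * Complex.exp ((1-(s:ℂ)^2)*z^2)
        - (starRingEnd ℂ) z * Complex.exp ((1-(s:ℂ)^2)*((starRingEnd ℂ) z)^2)) := by
  have h1 := (exp_hasSum ((1-(s:ℂ)^2)*z^2)).mul_left z
  have h2 := (exp_hasSum ((1-(s:ℂ)^2)*(starRingEnd ℂ z)^2)).mul_left (starRingEnd ℂ z)
  exact h1.sub h2

lemma FA_summable (z : ℂ) (s : ℝ) (h0 : 0 ≤ s) (h1 : s ≤ 1) : Summable (fun i => ‖FA z s i‖) :=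
  Summable.of_nonneg_of_le (fun _ => norm_nonneg _) (FA_bound z s h0 h1)
      ((Real.summable_pow_div_factorial (‖z‖^2)).mul_left (2*‖z‖))

lemma FB_summable (L : ℝ) (hL : 0 ≤ L) (z : ℂ) (s : ℝ) (h0 : 0 ≤ s) (h1 : s ≤ 1) :
    Summable (fun i => ‖FB L z s i‖) :=
  Summable.of_nonneg_of_le (fun _ => norm_nonneg _) (FB_bound L hL z s h0 h1)
      ((Real.summable_pow_div_factorial ((2*‖z‖^2)^2)).mul_left (Real.Gamma (2*L+1))⁻¹)

lemma FB_hasSum (L : ℝ) (hL : 0 ≤ L) (z : ℂ) (s : ℝ) (h0 : 0 ≤ s) (h1 : s ≤ 1) :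
    HasSum (fun j => (FB L z s j : ℂ)) ((MLER L ((2*s*‖z‖^2)^2) : ℝ) : ℂ) := by
  have hM : MLER L ((2*s*‖z‖^2)^2) = ∑' j, FB L z s j := by
    simp only [MLER, FB]
  rw [hM]
  exact Complex.hasSum_ofReal.mpr (FB_summable L hL z s h0 h1).of_norm.hasSum

lemma hasSum_mul_aux (f g : ℕ → ℂ) (a b c : ℂ) (hf : HasSum f a) (hg : HasSum g b)
    (hf' : Summable (fun i => ‖f i‖)) (hg' : Summable (fun i => ‖g i‖)) :
    HasSum (fun p : ℕ × ℕ => c * f p.1 * g p.2) (c * a * b) := by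
  have h3 : Summable (fun x : ℕ × ℕ => f x.1 * g x.2) :=
    summable_mul_of_summable_norm (R := ℂ) (f := f) (g := g) hf' hg'
  have h4 := hf.mul hg h3
  have h5 := h4.mul_left c
  simpa only [mul_assoc] using h5

lemma prod_hasSum (L : ℝ) (hL : 0 ≤ L) (z : ℂ) (s : ℝ) (h0 : 0 ≤ s) (h1 : s ≤ 1) :
    HasSum (fun p : ℕ × ℕ => ((s ^ (2*L) : ℝ) : ℂ) * FA z s p.1 * (FB L z s p.2 : ℂ))
      (((s ^ (2*L) : ℝ) : ℂ) *
      (z * Complex.exp ((1-(s:ℂ)^2)*z^2)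
        - (starRingEnd ℂ) z * Complex.exp ((1-(s:ℂ)^2)*((starRingEnd ℂ) z)^2)) *
      ((MLER L ((2*s*‖z‖^2)^2) : ℝ) : ℂ)) := by
  have hBs' : Summable (fun i => ‖(FB L z s i : ℂ)‖) := by
    simpa only [Complex.norm_real] using FB_summable L hL z s h0 h1
  exact hasSum_mul_aux (FA z s) (fun j => (FB L z s j : ℂ)) _ _ _ (FA_hasSum z s)
    (FB_hasSum L hL z s h0 h1) (FA_summable z s h0 h1) hBs'

lemma int_term (L : ℝ) (hL : 0 ≤ L) (z : ℂ) (p : ℕ × ℕ) :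
    ∫ s in (0:ℝ)..1, ((s ^ (2*L) : ℝ) : ℂ) * FA z s p.1 * (FB L z s p.2 : ℂ) =
      -(1/(4 * ((2^(2*L):ℝ):ℂ))) * ((aL L p : ℂ) * TT z p) := by
  obtain ⟨i, j⟩ := p
  have e : ∀ s ∈ Set.uIcc (0:ℝ) 1, ((s ^ (2*L) : ℝ) : ℂ) * FA z s i * (FB L z s j : ℂ) =
      ((s ^ (2*L+2*j) * (1-s^2)^i : ℝ):ℂ) *
        ((z^(2*i+1) - (starRingEnd ℂ z)^(2*i+1)) * (z * starRingEnd ℂ z)^(2*j) *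
          ((4^j / (i.factorial * Real.Gamma (2*j+1+2*L)) : ℝ) : ℂ)) := by
    intro s hs
    rw [Set.uIcc_of_le zero_le_one] at hs
    have hr : s ^ (2*L+2*(j:ℝ)) = s^(2*L) * s^(2*j) := by
      rw [Real.rpow_add_of_nonneg hs.1 (by positivity) (by positivity), ← Real.rpow_natCast s (2*j)]
      push_cast; rfl
    have hn : z * starRingEnd ℂ z = ((‖z‖^2 : ℝ):ℂ) := by
      rw [Complex.mul_conj, Complex.normSq_eq_norm_sq]
    rw [hr, hn]
    simp only [FA, FB]
    push_cast
    have hf : (i.factorial:ℂ) ≠ 0 := by exact_mod_cast Nat.factorial_ne_zero i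
    have hG : ((Real.Gamma (2*j+1+2*L) : ℝ):ℂ) ≠ 0 := by
      exact_mod_cast (Real.Gamma_pos_of_pos (by positivity)).ne'
    generalize ((Real.Gamma (2*j+1+2*L) : ℝ):ℂ) = G at *
    rw [mul_pow, mul_pow (1-(s:ℂ)^2)]
    field_simp
    ring
  rw [intervalIntegral.integral_congr e, intervalIntegral.integral_mul_const, intervalIntegral.integral_ofReal,
    aL_eq L hL i j]
  have h2 : ((2^(2*L):ℝ):ℂ) ≠ 0 := by exact_mod_cast (Real.rpow_pos_of_pos two_pos (2*L)).ne'
  simp only [TT]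
  generalize (2:ℝ)^(2*L) = c at *
  generalize (4:ℝ)^j / (i.factorial * Real.Gamma (2*j+1+2*L)) = d
  push_cast
  field_simp
  ring

lemma koConj_int (L : ℝ) (hL : 0 ≤ L) (z : ℂ) :
    (∫ s in (0:ℝ)..1, ((s ^ (2*L) : ℝ) : ℂ) *
      (z * Complex.exp ((1-(s:ℂ)^2)*z^2)
        - (starRingEnd ℂ) z * Complex.exp ((1-(s:ℂ)^2)*((starRingEnd ℂ) z)^2)) *
      ((MLER L ((2*s*‖z‖^2)^2) : ℝ) : ℂ)) = -(1/(4 * ((2^(2*L):ℝ):ℂ))) * SS (aL L) z := by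
  have hI : ∀ s : ℝ, s ∈ Set.uIoc (0:ℝ) 1 → 0 ≤ s ∧ s ≤ 1 := by
    intro s hs
    rw [Set.uIoc_of_le zero_le_one] at hs
    exact ⟨hs.1.le, hs.2⟩
  have hG : 0 < Real.Gamma (2*L+1) := Real.Gamma_pos_of_pos (by positivity)
  have hbs : Summable (fun p : ℕ × ℕ => (2 * ‖z‖ * ((‖z‖^2)^p.1 / p.1.factorial)) *
      ((Real.Gamma (2*L+1))⁻¹ * (((2*‖z‖^2)^2)^p.2 / p.2.factorial))) :=
    ((Real.summable_pow_div_factorial (‖z‖^2)).mul_left (2*‖z‖)).mul_of_nonneg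
      ((Real.summable_pow_div_factorial ((2*‖z‖^2)^2)).mul_left ((Real.Gamma (2*L+1))⁻¹))
      (fun i => by positivity) (fun j => by positivity)
  have h := intervalIntegral.hasSum_integral_of_dominated_convergence (μ := volume) (a := 0) (b := 1)
    (F := fun (p : ℕ × ℕ) (s : ℝ) => ((s ^ (2*L) : ℝ) : ℂ) * FA z s p.1 * (FB L z s p.2 : ℂ))
    (f := fun s : ℝ => ((s ^ (2*L) : ℝ) : ℂ) *
      (z * Complex.exp ((1-(s:ℂ)^2)*z^2)
        - (starRingEnd ℂ) z * Complex.exp ((1-(s:ℂ)^2)*((starRingEnd ℂ) z)^2)) *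
      ((MLER L ((2*s*‖z‖^2)^2) : ℝ) : ℂ))
    (fun p _ => (2 * ‖z‖ * ((‖z‖^2)^p.1 / p.1.factorial)) *
      ((Real.Gamma (2*L+1))⁻¹ * (((2*‖z‖^2)^2)^p.2 / p.2.factorial))) ?_ ?_ ?_ ?_ ?_
  · rw [← h.tsum_eq, SS, ← tsum_mul_left]
    exact tsum_congr fun p => int_term L hL z p
  · intro p
    refine Continuous.aestronglyMeasurable ?_
    have h1 : Continuous fun s : ℝ => s ^ (2*L) := Real.continuous_rpow_const (by positivity)
    unfold FA FB
    fun_prop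
  · intro p
    refine Eventually.of_forall fun s hs => ?_
    obtain ⟨h0, h1⟩ := hI s hs
    rw [norm_mul, norm_mul, Complex.norm_real, Complex.norm_real, Real.norm_of_nonneg (Real.rpow_nonneg h0 _)]
    have a1 := Real.rpow_le_one h0 h1 (by positivity : 0 ≤ 2*L)
    have a2 := FA_bound z s h0 h1 p.1
    have a3 := FB_bound L hL z s h0 h1 p.2
    exact mul_le_mul ((mul_le_of_le_one_left (norm_nonneg _) a1).trans a2) a3 (norm_nonneg _) (by positivity)
  · exact Eventually.of_forall fun s _ => hbs
  · exact intervalIntegrable_const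
  · refine Eventually.of_forall fun s hs => ?_
    obtain ⟨h0, h1⟩ := hI s hs
    exact prod_hasSum L hL z s h0 h1

lemma limit_eq (L : ℝ) (hL : 0 ≤ L) (z : ℂ) :
    ((starRingEnd ℂ) z - z) * ((Real.exp (-(2 * ‖z‖ ^ 2)) : ℝ) : ℂ) * koConj L z =
      (1/2) * (z - starRingEnd ℂ z) * ((‖z‖ ^ (4*L) : ℝ):ℂ) * ((Real.exp (-(2 * ‖z‖ ^ 2)) : ℝ) : ℂ) * SS (aL L) z := by
  rw [koConj, koConj_int L hL z]
  have e : (2 * ‖z‖ ^ 2) ^ (2*L) = 2^(2*L) * ‖z‖ ^ (4*L) := by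
    rw [Real.mul_rpow (by norm_num) (by positivity), ← Real.rpow_natCast ‖z‖ 2, ← Real.rpow_mul (norm_nonneg z)]
    congr 2
    push_cast; ring
  rw [e]
  have h2 : ((2^(2*L):ℝ):ℂ) ≠ 0 := by exact_mod_cast (Real.rpow_pos_of_pos two_pos (2*L)).ne'
  generalize (2:ℝ)^(2*L) = c at *
  generalize ‖z‖ ^ (4*L) = d
  push_cast
  field_simp
  ring

lemma TT_scale (z : ℂ) (c : ℝ) (p : ℕ × ℕ) :
    TT (z / (c:ℂ)) p = TT z p / (c:ℂ) ^ (2*p.1+4*p.2+1) := by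
  simp only [TT, map_div₀, Complex.conj_ofReal, div_pow, div_mul_div_comm, ← pow_add]
  rw [show 2*p.2 + (2*(p.1+p.2)+1) = 2*p.1+4*p.2+1 by ring, show (2*(p.1+p.2)+1)+2*p.2 = 2*p.1+4*p.2+1 by ring,
    sub_div]

lemma sum_reindex (N : ℕ) (G : ℕ → ℕ → ℂ) :
    ∑ k ∈ range N, ∑ l ∈ range (k+1), G k l =
      ∑ p ∈ (range N ×ˢ range N).filter (fun p => p.1+p.2 < N), G (p.1+p.2) p.2 := by
  rw [Finset.sum_sigma']
  refine Finset.sum_nbij' (fun x => (x.1 - x.2, x.2)) (fun p => ⟨p.1+p.2, p.2⟩) ?_ ?_ ?_ ?_ ?_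
  · rintro ⟨k, l⟩ h
    simp only [Finset.mem_sigma, Finset.mem_range, Finset.mem_filter, Finset.mem_product] at h ⊢
    omega
  · rintro ⟨i, j⟩ h
    simp only [Finset.mem_sigma, Finset.mem_range, Finset.mem_filter, Finset.mem_product] at h ⊢
    omega
  · rintro ⟨k, l⟩ h
    simp only [Finset.mem_sigma, Finset.mem_range] at h
    have : k - l + l = k := by omega
    simp [this]
  · rintro ⟨i, j⟩ h
    simp
  · rintro ⟨k, l⟩ h
    simp only [Finset.mem_sigma, Finset.mem_range] at h
    have : k - l + l = k := by omega
    simp only [this]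

lemma sum_eq_TT (N : ℕ) (n L : ℝ) (ζ : ℂ) :
    ∑ k ∈ range N, ((Q n L k).eval ζ * (starRingEnd ℂ ζ)^(2*k+1) -
        ζ^(2*k+1) * (Q n L k).eval (starRingEnd ℂ ζ)) / (hh n L (2*k+1):ℂ) =
      ∑ p ∈ (range N ×ˢ range N).filter (fun p => p.1+p.2 < N),
        (((∏ t ∈ Ico p.2 (p.1+p.2), cc n L t) / hh n L (2*(p.1+p.2)+1) : ℝ) : ℂ) * TT ζ p := by
  have h := sum_reindex N (fun k l => (((∏ t ∈ Ico l k, cc n L t) / hh n L (2*k+1) : ℝ) : ℂ) *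
    (ζ^(2*l) * (starRingEnd ℂ ζ)^(2*k+1) - ζ^(2*k+1) * (starRingEnd ℂ ζ)^(2*l)))
  simp only [TT]
  rw [← h]
  refine Finset.sum_congr rfl fun k _ => ?_
  rw [Q_eval, Q_eval, Finset.sum_mul, Finset.mul_sum, ← Finset.sum_sub_distrib, Finset.sum_div]
  refine Finset.sum_congr rfl fun l _ => ?_
  push_cast
  ring

lemma SS_aN (b L : ℝ) (N : ℕ) (z : ℂ) : SS (aN b L N) z =
    ∑ p ∈ (range N ×ˢ range N).filter (fun p => p.1+p.2 < N), ((ac ((b+1)*N) L p : ℝ) : ℂ) * TT z p := by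
  rw [SS, tsum_eq_sum (s := (range N ×ˢ range N).filter (fun p => p.1+p.2 < N))]
  · refine Finset.sum_congr rfl fun p hp => ?_
    rw [aN, if_pos (Finset.mem_filter.mp hp).2]
  · intro p hp
    have : ¬ p.1+p.2 < N := by
      intro h
      apply hp
      simp only [Finset.mem_filter, Finset.mem_product, Finset.mem_range]
      omega
    rw [aN, if_neg this]
    simp

lemma finN (b L : ℝ) (hb : 0 < b) (hL : 0 ≤ L) (N : ℕ) (hN : 0 < N) (z : ℂ) :
    ((((N : ℝ) * dlt N ((b+1)*N) L 0)⁻¹ *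
          R1 N ((b+1)*N) L (z / (sc N ((b+1)*N) L 0 : ℂ)) : ℝ) : ℂ) =
      (1/2) * (z - starRingEnd ℂ z) * ((‖z‖ ^ (4*L) : ℝ):ℂ) *
        (((1 + ‖z‖^2/((b+1)*N+L)) ^ (-(2*((b+1)*N+L+1))) : ℝ) : ℂ) * SS (aN b L N) z := by
  have hNr : (0:ℝ) < N := by exact_mod_cast hN
  have hm : 0 < (b+1)*(N:ℝ)+L := by positivity
  have hd : (N:ℝ) * dlt N ((b+1)*N) L 0 = (b+1)*N+L := by
    simp only [dlt]
    norm_num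
    field_simp
  rw [sc, hd, Complex.ofReal_mul, R1_eq N hN ((b+1)*N) L hL (by nlinarith), sum_eq_TT, SS_aN, Finset.mul_sum,
    Finset.mul_sum, Finset.mul_sum]
  refine Finset.sum_congr rfl fun p _ => ?_
  rw [TT_scale, wfun, ac]
  have hn2 : ‖z / ((√((b+1)*(N:ℝ)+L) : ℝ):ℂ)‖ = ‖z‖ / √((b+1)*(N:ℝ)+L) := by
    rw [norm_div, Complex.norm_real, Real.norm_of_nonneg (Real.sqrt_nonneg _)]
  rw [hn2, div_pow, Real.sq_sqrt hm.le, map_div₀, Complex.conj_ofReal, ← sub_div]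
  generalize (∏ t ∈ Ico p.2 (p.1+p.2), cc ((b+1)*(N:ℝ)) L t) / hh ((b+1)*(N:ℝ)) L (2*(p.1+p.2)+1) = X
  generalize (1 + ‖z‖^2/((b+1)*(N:ℝ)+L)) ^ (-(2*((b+1)*(N:ℝ)+L+1))) = W
  generalize (b+1)*(N:ℝ)+L = m at *
  have hs : 0 < √m := Real.sqrt_pos.mpr hm
  have key : m⁻¹ * ((√m)⁻¹ * ((‖z‖/√m) ^ (4*L) * (√m ^ (2*p.1+4*p.2+1))⁻¹)) =
      ‖z‖ ^ (4*L) * m ^ (-(2*L+2+p.1+2*p.2)) := by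
    rw [Real.div_rpow (norm_nonneg z) hs.le]
    have e1 : √m ^ (4*L) = m ^ (2*L) := by
      rw [Real.sqrt_eq_rpow, ← Real.rpow_mul hm.le]
      congr 1; ring
    have e2 : √m * √m ^ (2*p.1+4*p.2+1) = m ^ (p.1+2*p.2+1) := by
      rw [← pow_succ', show 2*p.1+4*p.2+1+1 = 2*(p.1+2*p.2+1) by ring, pow_mul, Real.sq_sqrt hm.le]
    have e3 : m ^ (2*L+2+p.1+2*p.2) = m * m^(2*L) * m ^ (p.1+2*p.2+1) := by
      rw [show 2*L+2+p.1+2*p.2 = 2*L + ((p.1+2*p.2+1+1 : ℕ):ℝ) by push_cast; ring, Real.rpow_add hm,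
        Real.rpow_natCast]
      ring
    rw [Real.rpow_neg hm.le, e3, ← e2, e1]
    have := Real.rpow_pos_of_pos hm (2*L)
    generalize m^(2*L) = Y at *
    field_simp
  have keyC := congrArg (fun x : ℝ => (x:ℂ)) key
  simp only [Complex.ofReal_mul, Complex.ofReal_inv, Complex.ofReal_pow] at keyC
  push_cast
  calc _ = ((m:ℂ)⁻¹ * (((√m:ℝ):ℂ)⁻¹ * ((((‖z‖/√m) ^ (4*L):ℝ):ℂ) * (((√m:ℝ):ℂ) ^ (2*p.1+4*p.2+1))⁻¹))) *
        ((1/2) * (z - starRingEnd ℂ z) * W * X * TT z p) := by ring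
    _ = _ := by rw [keyC]; ring

lemma exp_lip (x y : ℝ) (hx : 0 ≤ x) (hy : 0 ≤ y) : |Real.exp (-x) - Real.exp (-y)| ≤ |x - y| := by
  have key : ∀ x y : ℝ, 0 ≤ x → x ≤ y → |Real.exp (-x) - Real.exp (-y)| ≤ |x-y| := by
    intro x y hx hxy
    have h1 : Real.exp (-y) = Real.exp (-x) * Real.exp (-(y-x)) := by rw [← Real.exp_add]; ring_nf
    have h2 := Real.add_one_le_exp (-(y-x))
    have h3 : Real.exp (-x) ≤ 1 := Real.exp_le_one_iff.mpr (by linarith)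
    have h4 := Real.exp_pos (-x)
    have h5 : Real.exp (-y) ≤ Real.exp (-x) := Real.exp_le_exp.mpr (by linarith)
    rw [abs_of_nonneg (by linarith), abs_of_nonpos (by linarith), h1]
    nlinarith
  rcases le_total x y with h | h
  · exact key x y hx h
  · rw [abs_sub_comm, abs_sub_comm x y]; exact key y x hy h

lemma weight_bound (m t T : ℝ) (hm : 0 < m) (ht : 0 ≤ t) (htT : t ≤ T) :
    |(1 + t/m) ^ (-(2*(m+1))) - Real.exp (-(2*t))| ≤ 2*(T+T^2)/m := by
  have hp : 0 < 1 + t/m := by positivity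
  have e : (1 + t/m) ^ (-(2*(m+1))) = Real.exp (-(2*(m+1)*Real.log (1+t/m))) := by
    rw [Real.rpow_def_of_pos hp]; congr 1; ring
  have hl0 : 0 ≤ Real.log (1+t/m) := Real.log_nonneg (by have : 0 ≤ t/m := by positivity
                                                         linarith)
  rw [e]
  refine (exp_lip _ _ (by positivity) (by positivity)).trans ?_
  have u := Real.log_le_sub_one_of_pos hp
  have l := Real.one_sub_inv_le_log_of_pos hp
  have u2 : 2*(m+1)*Real.log (1+t/m) ≤ 2*t + 2*t/m := by
    calc _ ≤ 2*(m+1)*(t/m) := by gcongr; linarith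
      _ = _ := by field_simp
  have l2 : 2*t - 2*t^2/m ≤ 2*(m+1)*Real.log (1+t/m) := by
    have : 1 - (1+t/m)⁻¹ = t/(m+t) := by field_simp; ring
    rw [this] at l
    calc _ ≤ 2*(m+1)*(t/(m+t)) := by
            rw [← mul_div_assoc, le_div_iff₀ (by positivity), sub_mul, div_mul_eq_mul_div, sub_le_iff_le_add]
            have h1 : 2*t^2*(m+t)/m = 2*t^2 + 2*t^3/m := by field_simp
            have h2 : 0 ≤ 2*t^3/m := by positivity
            rw [h1]
            nlinarith
      _ ≤ _ := by gcongr
  have hT : t^2 ≤ T^2 := by gcongr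
  have a1 : 2*t/m ≤ 2*(T+T^2)/m := by gcongr; nlinarith
  have a2 : 2*t^2/m ≤ 2*(T+T^2)/m := by gcongr; nlinarith
  rw [abs_le]
  constructor <;> linarith

lemma SS_term_summable (b L : ℝ) (hb : 0 < b) (hL : 0 ≤ L) (a : ℕ × ℕ → ℝ) (ha : ∀ p, |a p| ≤ bd b L p)
    (R : ℝ) (z : ℂ) (hz : ‖z‖ ≤ R) :
    Summable (fun p => (a p : ℂ) * TT z p) ∧
      ∀ p, ‖(a p : ℂ) * TT z p‖ ≤ bd b L p * (2 * R ^ (2*p.1+4*p.2+1)) := by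
  have hR : 0 ≤ R := (norm_nonneg z).trans hz
  have h : ∀ p, ‖(a p : ℂ) * TT z p‖ ≤ bd b L p * (2 * R ^ (2*p.1+4*p.2+1)) := by
    intro p
    rw [norm_mul, Complex.norm_real, Real.norm_eq_abs]
    exact mul_le_mul (ha p) (TT_bound z R hz p) (norm_nonneg _) (bd_nonneg b L hb hL p)
  exact ⟨Summable.of_norm_bounded (bd_summable b L hb hL R hR) h, h⟩

lemma SS_bound (b L : ℝ) (hb : 0 < b) (hL : 0 ≤ L) (R : ℝ) (z : ℂ) (hz : ‖z‖ ≤ R) :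
    ‖SS (aL L) z‖ ≤ ∑' p : ℕ × ℕ, bd b L p * (2 * R ^ (2*p.1+4*p.2+1)) := by
  have hR : 0 ≤ R := (norm_nonneg z).trans hz
  exact tsum_of_norm_bounded (bd_summable b L hb hL R hR).hasSum
    (SS_term_summable b L hb hL (aL L) (aL_bound b L hb hL) R z hz).2

lemma SS_diff (b L : ℝ) (hb : 0 < b) (hL : 0 ≤ L) (R : ℝ) (z : ℂ) (hz : ‖z‖ ≤ R) (N : ℕ) :
    ‖SS (aN b L N) z - SS (aL L) z‖ ≤
      ∑' p : ℕ × ℕ, |aN b L N p - aL L p| * (2 * R ^ (2*p.1+4*p.2+1)) := by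
  have hR : 0 ≤ R := (norm_nonneg z).trans hz
  have s1 := (SS_term_summable b L hb hL (aN b L N) (aN_bound b L hb hL N) R z hz).1
  have s2 := (SS_term_summable b L hb hL (aL L) (aL_bound b L hb hL) R z hz).1
  rw [SS, SS, ← s1.tsum_sub s2]
  have hs : Summable (fun p : ℕ × ℕ => |aN b L N p - aL L p| * (2 * R ^ (2*p.1+4*p.2+1))) := by
    refine Summable.of_nonneg_of_le (fun p => by positivity) (fun p => ?_)
      ((bd_summable b L hb hL R hR).mul_left 2)
    have hc : (0:ℝ) ≤ 2 * R ^ (2*p.1+4*p.2+1) := by positivity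
    refine (mul_le_mul_of_nonneg_right (b := |aN b L N p - aL L p|) (c := 2 * bd b L p) ?_ hc).trans_eq (mul_assoc _ _ _)
    have h1 := aN_bound b L hb hL N p
    have h2 := aL_bound b L hb hL p
    have h3 := abs_sub (aN b L N p) (aL L p)
    linarith
  refine tsum_of_norm_bounded hs.hasSum fun p => ?_
  rw [← sub_mul, norm_mul, ← Complex.ofReal_sub, Complex.norm_real, Real.norm_eq_abs]
  exact mul_le_mul_of_nonneg_left (TT_bound z R hz p) (abs_nonneg _)

lemma err_tendsto (b L : ℝ) (hb : 0 < b) (hL : 0 ≤ L) (R : ℝ) (hR : 0 ≤ R) :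
    Tendsto (fun N : ℕ => R * R^(4*L) * ((∑' p : ℕ × ℕ, |aN b L N p - aL L p| * (2 * R ^ (2*p.1+4*p.2+1))) +
      2*(R^2+(R^2)^2)/((b+1)*N+L) * ∑' p : ℕ × ℕ, bd b L p * (2 * R ^ (2*p.1+4*p.2+1)))) atTop (nhds 0) := by
  have h1 : Tendsto (fun N : ℕ => (b+1)*(N:ℝ)+L) atTop atTop :=
    tendsto_atTop_add_const_right _ _ (tendsto_natCast_atTop_atTop.const_mul_atTop (by linarith))
  have h2 : Tendsto (fun N : ℕ => 2*(R^2+(R^2)^2)/((b+1)*(N:ℝ)+L)) atTop (nhds 0) :=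
    tendsto_const_nhds.div_atTop h1
  have h3 := ((coeff_tendsto b L hb hL R hR).add
    (h2.mul_const (∑' p : ℕ × ℕ, bd b L p * (2 * R ^ (2*p.1+4*p.2+1))))).const_mul (R * R^(4*L))
  simpa using h3

lemma main_bound (b L : ℝ) (hb : 0 < b) (hL : 0 ≤ L) (R : ℝ) (z : ℂ) (hz : ‖z‖ ≤ R) (N : ℕ) (hN : 0 < N) :
    ‖((starRingEnd ℂ) z - z) * ((Real.exp (-(2 * ‖z‖ ^ 2)) : ℝ) : ℂ) * koConj L z -
      ((((N : ℝ) * dlt N ((b+1)*N) L 0)⁻¹ *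
          R1 N ((b+1)*N) L (z / (sc N ((b+1)*N) L 0 : ℂ)) : ℝ) : ℂ)‖ ≤
    R * R^(4*L) * ((∑' p : ℕ × ℕ, |aN b L N p - aL L p| * (2 * R ^ (2*p.1+4*p.2+1))) +
      2*(R^2+(R^2)^2)/((b+1)*N+L) * ∑' p : ℕ × ℕ, bd b L p * (2 * R ^ (2*p.1+4*p.2+1))) := by
  rw [limit_eq L hL, finN b L hb hL N hN]
  have hNr : (0:ℝ) < N := by exact_mod_cast hN
  have hm : 0 < (b+1)*(N:ℝ)+L := by positivity
  have h1 := SS_diff b L hb hL R z hz N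
  have h2 := SS_bound b L hb hL R z hz
  have h3 := weight_bound ((b+1)*(N:ℝ)+L) (‖z‖^2) (R^2) hm (by positivity) (by gcongr)
  have hR : 0 ≤ R := (norm_nonneg z).trans hz
  have h4 : ‖((1 + ‖z‖^2/((b+1)*(N:ℝ)+L)) ^ (-(2*((b+1)*N+L+1))) : ℝ)‖ ≤ 1 := by
    rw [Real.norm_of_nonneg (by positivity)]
    refine Real.rpow_le_one_of_one_le_of_nonpos ?_ (by linarith)
    have : 0 ≤ ‖z‖^2/((b+1)*(N:ℝ)+L) := by positivity
    linarith
  have h5 : ‖z‖^(4*L) ≤ R^(4*L) := Real.rpow_le_rpow (norm_nonneg z) hz (by positivity)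
  have h6 : ‖z - starRingEnd ℂ z‖ ≤ 2 * R := by
    refine (norm_sub_le _ _).trans ?_
    rw [RCLike.norm_conj]; linarith
  have h60 := norm_nonneg (z - starRingEnd ℂ z)
  have h50 : 0 ≤ ‖z‖^(4*L) := by positivity
  generalize ∑' p : ℕ × ℕ, |aN b L N p - aL L p| * (2 * R ^ (2*p.1+4*p.2+1)) = D at *
  generalize ∑' p : ℕ × ℕ, bd b L p * (2 * R ^ (2*p.1+4*p.2+1)) = M at *
  generalize (1 + ‖z‖^2/((b+1)*(N:ℝ)+L)) ^ (-(2*((b+1)*(N:ℝ)+L+1))) = W at *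
  generalize Real.exp (-(2 * ‖z‖ ^ 2)) = E at *
  generalize SS (aN b L N) z = SN at *
  generalize SS (aL L) z = S at *
  generalize 2*(R^2+(R^2)^2)/((b+1)*(N:ℝ)+L) = ε at *
  have hε : 0 ≤ ε := (abs_nonneg _).trans h3
  have hD : 0 ≤ D := (norm_nonneg _).trans h1
  have hM : 0 ≤ M := (norm_nonneg _).trans h2
  have e : (1/2) * (z - starRingEnd ℂ z) * ((‖z‖ ^ (4*L) : ℝ):ℂ) * (E:ℂ) * S -
      (1/2) * (z - starRingEnd ℂ z) * ((‖z‖ ^ (4*L) : ℝ):ℂ) * (W:ℂ) * SN =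
      -((1/2) * (z - starRingEnd ℂ z) * ((‖z‖ ^ (4*L) : ℝ):ℂ) * ((W:ℂ) * (SN - S) + ((W - E : ℝ):ℂ) * S)) := by
    push_cast; ring
  rw [e, norm_neg, norm_mul, norm_mul, norm_mul, Complex.norm_real (‖z‖ ^ (4*L)), Real.norm_of_nonneg h50]
  have n1 : ‖(1/2:ℂ)‖ = 1/2 := by norm_num
  have n2 : ‖(W:ℂ) * (SN - S) + ((W - E : ℝ):ℂ) * S‖ ≤ D + ε * M := by
    refine (norm_add_le _ _).trans ?_
    rw [norm_mul, norm_mul, Complex.norm_real, Complex.norm_real, Real.norm_eq_abs (W-E)]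
    exact add_le_add ((mul_le_of_le_one_left (norm_nonneg _) h4).trans h1)
      (mul_le_mul h3 h2 (norm_nonneg _) hε)
  rw [n1]
  refine mul_le_mul (mul_le_mul (by linarith) h5 h50 hR) n2 (norm_nonneg _) (by positivity)

/-- Theorem 1.2(c), k = 1: universality of the one-point function at
the singular origin. -/
theorem one_point_universality_origin (L b : ℝ) (hL : 0 ≤ L) (hb : 0 < b)
    (K : Set ℂ) (hK : IsCompact K) :
    TendstoUniformlyOn
      (fun (N : ℕ) (z : ℂ) =>
        ((((N : ℝ) * dlt N ((b+1)*N) L 0)⁻¹ *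
          R1 N ((b+1)*N) L (z / (sc N ((b+1)*N) L 0 : ℂ)) : ℝ) : ℂ))
      (fun z => ((starRingEnd ℂ) z - z) * ((Real.exp (-(2 * ‖z‖ ^ 2)) : ℝ) : ℂ) *
        koConj L z)
      (atTop ⊓ 𝓟 (Ssing b)) K := by
  obtain ⟨R, hR0, hR⟩ : ∃ R : ℝ, 0 ≤ R ∧ ∀ z ∈ K, ‖z‖ ≤ R := by
    obtain ⟨R, hR⟩ := hK.isBounded.exists_norm_le
    exact ⟨max R 0, le_max_right _ _, fun z hz => (hR z hz).trans (le_max_left _ _)⟩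
  rw [Metric.tendstoUniformlyOn_iff]
  intro ε hε
  refine Eventually.filter_mono inf_le_left ?_
  filter_upwards [(err_tendsto b L hb hL R hR0).eventually_lt_const hε, eventually_gt_atTop 0] with N h1 h2 z hz
  rw [dist_eq_norm]
  exact (main_bound b L hb hL R z (hR z hz) N h2).trans_lt h1

end SI
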